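/- arXiv:1902.08506 — 7 statements merged into one kernel-verified Lean document; each statement's English description precedes it below -/
import Mathlib

section
/- Let m ≥ 1 be an integer and let p_-, q_-, p_+, q_+ ∈ ℝ with -1 < p_± ≤ q_± < 1. Then for each integer l̂ with 0 ≤ l̂ ≤ m there exists a unique real number ξ_l̂ solving the transcendental equation 2mξ + v_{p_-}(ξ) + v_{q_-}(ξ) + v_{p_+}(ξ) + v_{q_+}(ξ) = 2π(l̂+1), and these solutions interlace strictly inside (0,π): 0 < ξ_0 < ξ_1 < ⋯ < ξ_{m-1} < ξ_m < π. -/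
/-!
The Poisson kernel has the global antiderivative `ξ + 2 arctan (q sin ξ / (1 - q cos ξ))` when
`|q| < 1` (`v_eq`), so `v q` is continuous, `v q 0 = 0` and `v q π = π`; positivity of the kernel
makes `v q` monotone (`v_mono`). Hence the left-hand side of the equation is continuous, strictly
increasing because of the term `2mξ` with `m ≥ 1`, vanishes at `0` and equals `2π(m+2)` at `π`.
All the values `2π(l+1)` with `0 ≤ l ≤ m` lie strictly between, so the intermediate value theorem
gives existence in `(0, π)`, and strict monotonicity gives uniqueness and the ordering.
-/

/-- The function `v_q(ξ) = ∫_0^ξ (1-q²)/(1-2q cos x + q²) dx`. -/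
noncomputable def v (q ξ : ℝ) : ℝ :=
  ∫ x in (0:ℝ)..ξ, (1 - q^2) / (1 - 2*q*Real.cos x + q^2)

lemma one_sub_mul_cos_pos {q : ℝ} (hq : -1 < q) (hq' : q < 1) (x : ℝ) :
    0 < 1 - q * Real.cos x := by
  have h : |q * Real.cos x| < 1 := by
    rw [abs_mul]
    exact (mul_le_of_le_one_right (abs_nonneg _) (Real.abs_cos_le_one x)).trans_lt
      (abs_lt.2 ⟨hq, hq'⟩)
  linarith [(abs_lt.1 h).2]

lemma poisson_denom_pos {q : ℝ} (hq : -1 < q) (hq' : q < 1) (x : ℝ) :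
    0 < 1 - 2*q*Real.cos x + q^2 := by
  have h : 1 - 2*q*Real.cos x + q^2 = (1 - q * Real.cos x)^2 + (q * Real.sin x)^2 := by
    linear_combination (-q^2) * Real.sin_sq_add_cos_sq x
  have := one_sub_mul_cos_pos hq hq' x
  rw [h]
  positivity

/-- Geometrically, the primitive is `x - 2 arg (1 - q exp (i x))`; for `|q| < 1` the point
`1 - q exp (i x)` stays in the right half-plane, so the arctangent formula has no branch jumps. -/
lemma hasDerivAt_poisson_primitive {q : ℝ} (hq : -1 < q) (hq' : q < 1) (x : ℝ) :
    HasDerivAt (fun x => x + 2 * Real.arctan (q * Real.sin x / (1 - q * Real.cos x)))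
      ((1 - q^2) / (1 - 2*q*Real.cos x + q^2)) x := by
  have hc := one_sub_mul_cos_pos hq hq' x
  have hD := poisson_denom_pos hq hq' x
  have h := (hasDerivAt_id x).add (((((Real.hasDerivAt_sin x).const_mul q).div
    (((Real.hasDerivAt_cos x).const_mul q).const_sub 1) hc.ne').arctan).const_mul 2)
  refine h.congr_deriv ?_
  have hs : Real.sin x ^ 2 = 1 - Real.cos x ^ 2 := Real.sin_sq x
  have hE : 1 + (q * Real.sin x / (1 - q * Real.cos x)) ^ 2
      = (1 - 2*q*Real.cos x + q^2) / (1 - q * Real.cos x) ^ 2 := by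
    field_simp
    linear_combination q^2 * hs
  simp only [Pi.div_apply]
  rw [hE]
  field_simp
  linear_combination (-2 * q^2) * hs

lemma v_eq {q : ℝ} (hq : -1 < q) (hq' : q < 1) (ξ : ℝ) :
    v q ξ = ξ + 2 * Real.arctan (q * Real.sin ξ / (1 - q * Real.cos ξ)) := by
  have hcont : Continuous fun x => (1 - q^2) / (1 - 2*q*Real.cos x + q^2) :=
    continuous_const.div (by fun_prop) fun x => (poisson_denom_pos hq hq' x).ne'
  rw [v, intervalIntegral.integral_eq_sub_of_hasDerivAt
    (fun x _ => hasDerivAt_poisson_primitive hq hq' x) (hcont.intervalIntegrable _ _)]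
  simp

lemma v_hasDerivAt {q : ℝ} (hq : -1 < q) (hq' : q < 1) (x : ℝ) :
    HasDerivAt (v q) ((1 - q^2) / (1 - 2*q*Real.cos x + q^2)) x := by
  rw [funext (v_eq hq hq')]
  exact hasDerivAt_poisson_primitive hq hq' x

lemma v_continuous {q : ℝ} (hq : -1 < q) (hq' : q < 1) : Continuous (v q) :=
  continuous_iff_continuousAt.2 fun x => (v_hasDerivAt hq hq' x).continuousAt

lemma v_mono {q : ℝ} (hq : -1 < q) (hq' : q < 1) : Monotone (v q) :=
  monotone_of_hasDerivAt_nonneg (v_hasDerivAt hq hq') fun x =>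
    div_nonneg (by nlinarith) (poisson_denom_pos hq hq' x).le

lemma v_zero (q : ℝ) : v q 0 = 0 := by simp [v]

lemma v_pi {q : ℝ} (hq : -1 < q) (hq' : q < 1) : v q Real.pi = Real.pi := by
  simp [v_eq hq hq']

theorem stmt3 (m : ℕ) (hm : 1 ≤ m) (pm qm pp qp : ℝ)
    (h1 : -1 < pm) (h2 : pm ≤ qm) (h3 : qm < 1)
    (h4 : -1 < pp) (h5 : pp ≤ qp) (h6 : qp < 1) :
    (∀ lh : Fin (m+1), ∃! ξ : ℝ,
      2*(m:ℝ)*ξ + v pm ξ + v qm ξ + v pp ξ + v qp ξ = 2*Real.pi*(((lh : ℕ) : ℝ) + 1)) ∧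
    (∀ ξhat : Fin (m+1) → ℝ,
      (∀ lh : Fin (m+1),
        2*(m:ℝ)*(ξhat lh) + v pm (ξhat lh) + v qm (ξhat lh) + v pp (ξhat lh) + v qp (ξhat lh)
          = 2*Real.pi*(((lh : ℕ) : ℝ) + 1)) →
      (∀ lh : Fin (m+1), 0 < ξhat lh ∧ ξhat lh < Real.pi) ∧ StrictMono ξhat) := by
  have a1 : pm < 1 := by linarith
  have a2 : -1 < qm := by linarith
  have a3 : pp < 1 := by linarith
  have a4 : -1 < qp := by linarith
  have hpi := Real.pi_pos
  have hm' : (1:ℝ) ≤ m := by exact_mod_cast hm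
  set f : ℝ → ℝ := fun ξ => 2*(m:ℝ)*ξ + v pm ξ + v qm ξ + v pp ξ + v qp ξ with hf
  have hmono : StrictMono f := by
    intro x y hxy
    have b1 := v_mono h1 a1 hxy.le
    have b2 := v_mono a2 h3 hxy.le
    have b3 := v_mono h4 a3 hxy.le
    have b4 := v_mono a4 h6 hxy.le
    simp only [hf]
    nlinarith
  have hcont : Continuous f := by
    have c1 := v_continuous h1 a1
    have c2 := v_continuous a2 h3
    have c3 := v_continuous h4 a3
    have c4 := v_continuous a4 h6
    fun_prop
  have f0 : f 0 = 0 := by simp [hf, v_zero]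
  have fpi : f Real.pi = 2*Real.pi*(m+2) := by
    simp only [hf, v_pi h1 a1, v_pi a2 h3, v_pi h4 a3, v_pi a4 h6]
    ring
  have hpos (l : Fin (m+1)) : f 0 < 2*Real.pi*(((l : ℕ) : ℝ) + 1) := by
    rw [f0]; positivity
  have hlt (l : Fin (m+1)) : 2*Real.pi*(((l : ℕ) : ℝ) + 1) < f Real.pi := by
    have hl : ((l : ℕ) : ℝ) ≤ m := by exact_mod_cast Nat.lt_succ_iff.1 l.2
    rw [fpi]
    exact mul_lt_mul_of_pos_left (by linarith) (by positivity)
  refine ⟨fun l => ?_, fun ξ hξ => ?_⟩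
  · obtain ⟨x, -, hx⟩ := intermediate_value_Icc hpi.le hcont.continuousOn
      ⟨(hpos l).le, (hlt l).le⟩
    exact ⟨x, hx, fun y hy => hmono.injective (hy.trans hx.symm)⟩
  · change ∀ l, f (ξ l) = _ at hξ
    refine ⟨fun l => ⟨hmono.lt_iff_lt.1 ((hpos l).trans_eq (hξ l).symm),
      hmono.lt_iff_lt.1 ((hξ l).trans_lt (hlt l))⟩, fun k l hkl => ?_⟩
    rw [← hmono.lt_iff_lt, hξ, hξ]
    have : ((k : ℕ) : ℝ) < (l : ℕ) := by exact_mod_cast hkl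
    exact mul_lt_mul_of_pos_left (by linarith) (by positivity)
end

section
/- Let m ≥ 1 be an integer, let p_-, q_-, p_+, q_+ ∈ ℝ with -1 < p_± ≤ q_± < 1, and for 0 ≤ l̂ ≤ m let ξ_l̂^{(m)} denote the unique real solution of 2mξ + v_{p_-}(ξ) + v_{q_-}(ξ) + v_{p_+}(ξ) + v_{q_+}(ξ) = 2π(l̂+1). Set κ_± := (1/2)( ((1-|p_-|)/(1+|p_-|))^{±1} + ((1-|q_-|)/(1+|q_-|))^{±1} + ((1-|p_+|)/(1+|p_+|))^{±1} + ((1-|q_+|)/(1+|q_+|))^{±1} ). Then for all 0 ≤ l̂, k̂ ≤ m with l̂ ≠ k̂ the spectral gaps satisfy π|l̂-k̂|/(m+κ_-) ≤ |ξ_l̂^{(m)} - ξ_k̂^{(m)}| ≤ π|l̂-k̂|/(m+κ_+). -/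
theorem poisson_denom_bounds (q x : ℝ) :
    (1 - |q|) ^ 2 ≤ 1 - 2 * q * Real.cos x + q ^ 2 ∧
      1 - 2 * q * Real.cos x + q ^ 2 ≤ (1 + |q|) ^ 2 := by
  have h : |q * Real.cos x| ≤ |q| := by
    rw [abs_mul]
    exact mul_le_of_le_one_right (abs_nonneg q) (Real.abs_cos_le_one x)
  have h' := abs_le.mp h
  have hs := sq_abs q
  constructor <;> nlinarith [h'.1, h'.2]

/-- Pointwise bounds on the integrand of `v q`; the numerator factors as
`(1 - |q|) * (1 + |q|)`. -/
theorem poisson_bounds {q : ℝ} (hq : |q| < 1) (x : ℝ) :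
    (1 - |q|) / (1 + |q|) ≤ (1 - q ^ 2) / (1 - 2 * q * Real.cos x + q ^ 2) ∧
      (1 - q ^ 2) / (1 - 2 * q * Real.cos x + q ^ 2) ≤ (1 + |q|) / (1 - |q|) := by
  obtain ⟨hl, hu⟩ := poisson_denom_bounds q x
  have h0 := abs_nonneg q
  have ha : 0 < 1 - |q| := by linarith
  have hb : 0 < 1 + |q| := by linarith
  have hD : 0 < 1 - 2 * q * Real.cos x + q ^ 2 := lt_of_lt_of_le (by positivity) hl
  have hN : 1 - q ^ 2 = (1 - |q|) * (1 + |q|) := by rw [← sq_abs q]; ring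
  rw [hN]
  constructor
  · rw [div_le_div_iff₀ hb hD]
    nlinarith [mul_le_mul_of_nonneg_left hu ha.le]
  · rw [div_le_div_iff₀ hD ha]
    nlinarith [mul_le_mul_of_nonneg_left hl hb.le]

/-- The mean-value bounds on the increments of `v q`, from integrating `poisson_bounds`. -/
theorem v_sub_bounds {q : ℝ} (hq : |q| < 1) {x y : ℝ} (hxy : x ≤ y) :
    (1 - |q|) / (1 + |q|) * (y - x) ≤ v q y - v q x ∧
      v q y - v q x ≤ (1 + |q|) / (1 - |q|) * (y - x) := by
  have hc : Continuous fun t : ℝ => (1 - q ^ 2) / (1 - 2 * q * Real.cos t + q ^ 2) := by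
    refine Continuous.div (by fun_prop) (by fun_prop) fun t => ?_
    have ha : 0 < 1 - |q| := by linarith
    exact (lt_of_lt_of_le (by positivity) (poisson_denom_bounds q t).1).ne'
  have hsub : v q y - v q x
      = ∫ t in x..y, (1 - q ^ 2) / (1 - 2 * q * Real.cos t + q ^ 2) :=
    intervalIntegral.integral_interval_sub_left (hc.intervalIntegrable _ _)
      (hc.intervalIntegrable _ _)
  have hconst (c : ℝ) : c * (y - x) = ∫ _ in x..y, c := by
    rw [intervalIntegral.integral_const, smul_eq_mul, mul_comm]
  rw [hsub, hconst, hconst]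
  exact ⟨intervalIntegral.integral_mono_on hxy (by simp) (hc.intervalIntegrable _ _)
      fun t _ => (poisson_bounds hq t).1,
    intervalIntegral.integral_mono_on hxy (hc.intervalIntegrable _ _) (by simp)
      fun t _ => (poisson_bounds hq t).2⟩

theorem stmt5 (m : ℕ) (hm : 1 ≤ m) (pm qm pp qp : ℝ)
    (h1 : -1 < pm) (h2 : pm ≤ qm) (h3 : qm < 1)
    (h4 : -1 < pp) (h5 : pp ≤ qp) (h6 : qp < 1)
    (ξhat : Fin (m+1) → ℝ)
    (hξ : ∀ lh : Fin (m+1),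
      2*(m:ℝ)*(ξhat lh) + v pm (ξhat lh) + v qm (ξhat lh) + v pp (ξhat lh) + v qp (ξhat lh)
        = 2*Real.pi*(((lh : ℕ) : ℝ) + 1)) :
    ∀ lh kh : Fin (m+1), lh ≠ kh →
      Real.pi*|((lh : ℕ) : ℝ) - ((kh : ℕ) : ℝ)| /
        ((m:ℝ) + (1/2)*((1+|pm|)/(1-|pm|) + (1+|qm|)/(1-|qm|)
          + (1+|pp|)/(1-|pp|) + (1+|qp|)/(1-|qp|))) ≤ |ξhat lh - ξhat kh| ∧
      |ξhat lh - ξhat kh| ≤ Real.pi*|((lh : ℕ) : ℝ) - ((kh : ℕ) : ℝ)| /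
        ((m:ℝ) + (1/2)*((1-|pm|)/(1+|pm|) + (1-|qm|)/(1+|qm|)
          + (1-|pp|)/(1+|pp|) + (1-|qp|)/(1+|qp|))) := by
  intro lh kh hne
  wlog hle : ξhat kh ≤ ξhat lh generalizing lh kh
  · rw [abs_sub_comm (ξhat lh), abs_sub_comm ((lh : ℕ) : ℝ)]
    exact this kh lh hne.symm (le_of_not_ge hle)
  have hm' : (1 : ℝ) ≤ m := by exact_mod_cast hm
  have key {q : ℝ} (ha : -1 < q) (hb : q < 1) :
      0 ≤ (1 - |q|) / (1 + |q|) ∧ 0 ≤ (1 + |q|) / (1 - |q|) ∧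
      (1 - |q|) / (1 + |q|) * (ξhat lh - ξhat kh) ≤ v q (ξhat lh) - v q (ξhat kh) ∧
      v q (ξhat lh) - v q (ξhat kh) ≤ (1 + |q|) / (1 - |q|) * (ξhat lh - ξhat kh) := by
    have hq : |q| < 1 := abs_lt.mpr ⟨ha, hb⟩
    have h0 : 0 < 1 - |q| := by linarith
    exact ⟨by positivity, by positivity, v_sub_bounds hq hle⟩
  obtain ⟨a1, b1, l1, u1⟩ := key h1 (h2.trans_lt h3)
  obtain ⟨a2, b2, l2, u2⟩ := key (h1.trans_le h2) h3
  obtain ⟨a3, b3, l3, u3⟩ := key h4 (h5.trans_lt h6)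
  obtain ⟨a4, b4, l4, u4⟩ := key (h4.trans_le h5) h6
  have el := hξ lh
  have ek := hξ kh
  have hd : 0 ≤ ξhat lh - ξhat kh := sub_nonneg.mpr hle
  -- The left-hand side of the defining equation is increasing, so the indices are ordered
  -- as the solutions are.
  have hlk : 0 ≤ ((lh : ℕ) : ℝ) - ((kh : ℕ) : ℝ) := by
    refine nonneg_of_mul_nonneg_right (a := 2 * Real.pi) ?_ (by positivity)
    have := mul_nonneg a1 hd
    have := mul_nonneg a2 hd
    have := mul_nonneg a3 hd
    have := mul_nonneg a4 hd
    have := mul_nonneg (by linarith : (0 : ℝ) ≤ m) hd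
    linarith
  rw [abs_of_nonneg hd, abs_of_nonneg hlk]
  constructor
  · rw [div_le_iff₀ (by linarith)]
    linarith
  · rw [le_div_iff₀ (by linarith)]
    linarith
end

section
/- Let p_-, q_- ∈ ℝ with -1 < p_- ≤ q_- < 1, set a_- = p_- q_- and b_- = p_- + q_-, and define c(ξ) := (1 - p_- e^{-iξ})(1 - q_- e^{-iξ})/(1 - e^{-2iξ}) for real ξ with e^{2iξ} ≠ 1. Then for every integer l ∈ ℤ, c(ξ) e^{ilξ} + c(-ξ) e^{-ilξ} = U_l(cos ξ) - b_- U_{l-1}(cos ξ) + a_- U_{l-2}(cos ξ), where U_l denotes the Chebyshev polynomial of the second kind indexed by ℤ (so that U_l(cos ξ) = sin((l+1)ξ)/sin ξ, with U_{-1} = 0 and U_{-2} = -1). -/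
/-!
Put `z = e^{iξ}`. The Chebyshev polynomials satisfy
`U_n(cos ξ) (z - z⁻¹) = z^{n+1} - z^{-(n+1)}` for every integer `n` (`chebyshevU_mul_exp_sub`).
Since `z - z⁻¹ ≠ 0`, the claim may be multiplied by this factor. The amplitudes then become
`c(ξ)(z - z⁻¹) = z (1 - p₋z⁻¹)(1 - q₋z⁻¹)` and `c(-ξ)(z - z⁻¹) = -z⁻¹ (1 - p₋z)(1 - q₋z)`,
and expanding the products gives the three Chebyshev terms.
-/

/-- The complex amplitude `c(ξ) = (1-p₋e^{-iξ})(1-q₋e^{-iξ})/(1-e^{-2iξ})`. -/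
noncomputable def cAmp (pm qm : ℝ) (ξ : ℝ) : ℂ :=
  (1 - (pm : ℂ) * Complex.exp (-Complex.I * ξ)) * (1 - (qm : ℂ) * Complex.exp (-Complex.I * ξ)) /
    (1 - Complex.exp (-2 * Complex.I * ξ))

/-- The sine formula `U_n(cos ξ) sin ξ = sin ((n+1)ξ)` in exponential form. -/
theorem chebyshevU_mul_exp_sub (ξ : ℝ) (n : ℤ) :
    (((Polynomial.Chebyshev.U ℝ n).eval (Real.cos ξ) : ℝ) : ℂ)
        * (Complex.exp (Complex.I * ξ) - Complex.exp (-(Complex.I * ξ)))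
      = Complex.exp (Complex.I * ((n + 1) * ξ)) - Complex.exp (-(Complex.I * ((n + 1) * ξ))) := by
  have two_I_sin (x : ℂ) : Complex.exp (Complex.I * x) - Complex.exp (-(Complex.I * x))
      = 2 * Complex.I * Complex.sin x := by
    rw [mul_comm Complex.I x, ← neg_mul, Complex.exp_mul_I, Complex.exp_mul_I,
      Complex.cos_neg, Complex.sin_neg]
    ring
  have h : (((Polynomial.Chebyshev.U ℝ n).eval (Real.cos ξ) : ℝ) : ℂ) * Complex.sin ξ
      = Complex.sin ((n + 1) * ξ) := by
    exact_mod_cast congrArg (fun x : ℝ => (x : ℂ)) (Polynomial.Chebyshev.U_real_cos ξ n)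
  rw [two_I_sin, two_I_sin]
  linear_combination 2 * Complex.I * h

theorem stmt6 (pm qm : ℝ) (h1 : -1 < pm) (h2 : pm ≤ qm) (h3 : qm < 1)
    (am bm : ℝ) (ham : am = pm * qm) (hbm : bm = pm + qm)
    (ξ : ℝ) (hξ : Complex.exp (2 * Complex.I * ξ) ≠ 1) (l : ℤ) :
    cAmp pm qm ξ * Complex.exp (Complex.I * l * ξ)
      + cAmp pm qm (-ξ) * Complex.exp (-Complex.I * l * ξ)
    = (((Polynomial.Chebyshev.U ℝ l).eval (Real.cos ξ)
        - bm * (Polynomial.Chebyshev.U ℝ (l - 1)).eval (Real.cos ξ)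
        + am * (Polynomial.Chebyshev.U ℝ (l - 2)).eval (Real.cos ξ) : ℝ) : ℂ) := by
  subst ham hbm
  have hU0 := chebyshevU_mul_exp_sub ξ l
  have hU1 := chebyshevU_mul_exp_sub ξ (l - 1)
  have hU2 := chebyshevU_mul_exp_sub ξ (l - 2)
  push_cast at hU0 hU1 hU2
  rw [show Complex.I * (((l : ℂ) + 1) * ξ) = Complex.I * l * ξ + Complex.I * ξ by ring,
    neg_add, Complex.exp_add, Complex.exp_add] at hU0
  rw [show Complex.I * (((l : ℂ) - 1 + 1) * ξ) = Complex.I * l * ξ by ring] at hU1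
  rw [show Complex.I * (((l : ℂ) - 2 + 1) * ξ) = Complex.I * l * ξ + -(Complex.I * ξ) by ring,
    neg_add, neg_neg, Complex.exp_add, Complex.exp_add] at hU2
  have hzw : Complex.exp (Complex.I * ξ) * Complex.exp (-(Complex.I * ξ)) = 1 := by
    rw [← Complex.exp_add, add_neg_cancel, Complex.exp_zero]
  have hz2 : Complex.exp (2 * Complex.I * ξ) = Complex.exp (Complex.I * ξ) ^ 2 := by
    rw [← Complex.exp_nat_mul]; push_cast; ring_nf
  have hw2 : Complex.exp (-2 * Complex.I * ξ) = Complex.exp (-(Complex.I * ξ)) ^ 2 := by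
    rw [← Complex.exp_nat_mul]; push_cast; ring_nf
  rw [hz2] at hξ
  unfold cAmp
  push_cast
  rw [show -2 * Complex.I * -(ξ : ℂ) = 2 * Complex.I * ξ by ring, hz2, hw2,
    show -Complex.I * -(ξ : ℂ) = Complex.I * ξ by ring,
    show -Complex.I * (ξ : ℂ) = -(Complex.I * ξ) by ring,
    show -Complex.I * (l : ℂ) * ξ = -(Complex.I * l * ξ) by ring]
  -- With `Z = e^{ilξ}` and `W = e^{-ilξ}` only algebra in `z, w, Z, W` with `z * w = 1` remains;
  -- the relation `Z * W = 1` plays no role.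
  generalize Complex.exp (Complex.I * ξ) = z at *
  generalize Complex.exp (-(Complex.I * ξ)) = w at *
  generalize Complex.exp (Complex.I * l * ξ) = Z at *
  generalize Complex.exp (-(Complex.I * l * ξ)) = W at *
  have hne : z - w ≠ 0 := fun h => hξ (by linear_combination z * h + hzw)
  have hdz : 1 - z ^ 2 ≠ 0 := sub_ne_zero.mpr (Ne.symm hξ)
  have hdw : 1 - w ^ 2 ≠ 0 := fun h => hξ (by linear_combination z ^ 2 * h + (z * w + 1) * hzw)
  have hc (s : ℂ) : s / (1 - w ^ 2) * (z - w) = z * s := by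
    field_simp
    linear_combination s * w * hzw
  have hc' (s : ℂ) : s / (1 - z ^ 2) * (z - w) = -(w * s) := by
    field_simp
    linear_combination -s * z * hzw
  apply mul_right_cancel₀ hne
  rw [add_mul, mul_right_comm, hc, mul_right_comm _ W, hc']
  linear_combination -hU0 + (pm + qm) * hU1 - pm * qm * hU2
    + ((pm + qm) * (W - Z) + pm * qm * (w * Z - z * W)) * hzw
end

section
/- Let m ≥ 1, let p_-, q_-, p_+, q_+ ∈ ℝ with -1 < p_± ≤ q_± < 1, set a_± = p_± q_±, b_± = p_± + q_±, and let p_l(ξ) := U_l(cos ξ) - b_- U_{l-1}(cos ξ) + a_- U_{l-2}(cos ξ). Suppose ξ ∈ (0,π) satisfies e^{2imξ}(e^{iξ}-p_-)(e^{iξ}-q_-)(e^{iξ}-p_+)(e^{iξ}-q_+) = (1-p_- e^{iξ})(1-q_- e^{iξ})(1-p_+ e^{iξ})(1-q_+ e^{iξ}). Then the function f(l) := p_l(ξ) on {0,1,…,m} is an eigenfunction of the boundary-perturbed discrete Laplacian with eigenvalue 2 cos ξ; explicitly: (1-a_-) f(1) + b_- f(0) = 2 cos(ξ) f(0), f(l+1)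 + f(l-1) = 2 cos(ξ) f(l) for 0 < l < m, and (1-a_+) f(m-1) + b_+ f(m) = 2 cos(ξ) f(m). -/
/-!
Every Chebyshev polynomial obeys `U_{l+1} + U_{l-1} = 2 cos ξ · U_l`, hence so does `bs`, which gives
the interior equations. The left boundary equation follows from `U_0 = 1`, `U_{-1} = 0`,
`U_{-2} = -1`. By the recurrence at `l = m`, the right boundary equation is equivalent to
`p_{m+1} - b₊ p_m + a₊ p_{m-1} = 0`. With `z = e^{iξ}` and `U_l = (z^{l+1} - z^{-l-1}) / (z - z⁻¹)`,
this expression times `z - z⁻¹` is `z^{-m-2}` times the difference of the two sides of the algebraic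
equation for `ξ` (`boundary_algebra`), while `z - z⁻¹ = 2i sin ξ ≠ 0` since `0 < ξ < π`.
-/

/-- The Bernstein–Szegő polynomial `p_l(ξ) = U_l(cos ξ) - b₋ U_{l-1}(cos ξ) + a₋ U_{l-2}(cos ξ)`,
with the Chebyshev polynomials of the second kind indexed by `ℤ`. -/
noncomputable def bs (am bm : ℝ) (l : ℤ) (ξ : ℝ) : ℝ :=
  (Polynomial.Chebyshev.U ℝ l).eval (Real.cos ξ)
    - bm * (Polynomial.Chebyshev.U ℝ (l - 1)).eval (Real.cos ξ)
    + am * (Polynomial.Chebyshev.U ℝ (l - 2)).eval (Real.cos ξ)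

theorem U_rec (ξ : ℝ) (l : ℤ) :
    (Polynomial.Chebyshev.U ℝ (l + 1)).eval (Real.cos ξ)
      = 2 * Real.cos ξ * (Polynomial.Chebyshev.U ℝ l).eval (Real.cos ξ)
        - (Polynomial.Chebyshev.U ℝ (l - 1)).eval (Real.cos ξ) := by
  have h := congrArg (Polynomial.eval (Real.cos ξ)) (Polynomial.Chebyshev.U_add_two ℝ (l - 1))
  rw [show l - 1 + 2 = l + 1 by ring, show l - 1 + 1 = l by ring] at h
  simpa using h

theorem bs_rec (am bm ξ : ℝ) (l : ℤ) :
    bs am bm (l + 1) ξ + bs am bm (l - 1) ξ = 2 * Real.cos ξ * bs am bm l ξ := by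
  have h0 := U_rec ξ l
  have h1 := U_rec ξ (l - 1)
  have h2 := U_rec ξ (l - 2)
  unfold bs
  ring_nf at h0 h1 h2 ⊢
  rw [h0, h1, h2]
  ring

/-- The right boundary condition `p_{m+1} - b₊ p_m + a₊ p_{m-1} = 0`, with all Chebyshev values
expressed through `u = U_m` and `v = U_{m-1}`. Here `z = e^{iξ}`, `Z = e^{imξ}`, and `c`, `s` stand
for `cos ξ`, `sin ξ`. -/
theorem boundary_algebra {z Z c s u v p q p' q' : ℂ} (hz : z ≠ 0) (hZ : Z ≠ 0) (hs : s ≠ 0)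
    (hc : 2 * c = z + z⁻¹)
    (hu : 2 * Complex.I * (u * s) = Z * z - Z⁻¹ * z⁻¹)
    (hv : 2 * Complex.I * (v * s) = Z - Z⁻¹)
    (h : Z ^ 2 * ((z - p) * (z - q) * (z - p') * (z - q'))
      = (1 - p * z) * (1 - q * z) * (1 - p' * z) * (1 - q' * z)) :
    ((2 * c * u - v) - (p + q) * u + p * q * v)
      - (p' + q') * (u - (p + q) * v + p * q * (2 * c * v - u))
      + p' * q' * (v - (p + q) * (2 * c * v - u)
        + p * q * (2 * c * (2 * c * v - u) - v)) = 0 := by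
  have hIs : 2 * Complex.I * s ≠ 0 :=
    mul_ne_zero (mul_ne_zero two_ne_zero Complex.I_ne_zero) hs
  have hu' : u = (Z * z - Z⁻¹ * z⁻¹) / (2 * Complex.I * s) := by
    rw [eq_div_iff hIs, ← hu]; ring
  have hv' : v = (Z - Z⁻¹) / (2 * Complex.I * s) := by
    rw [eq_div_iff hIs, ← hv]; ring
  rw [hu', hv', hc]
  have hI := Complex.I_ne_zero
  field_simp
  linear_combination h

theorem stmt9 (m : ℕ) (hm : 1 ≤ m) (pm qm pp qp : ℝ)
    (h1 : -1 < pm) (h2 : pm ≤ qm) (h3 : qm < 1)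
    (h4 : -1 < pp) (h5 : pp ≤ qp) (h6 : qp < 1)
    (am bm ap bp : ℝ) (ham : am = pm * qm) (hbm : bm = pm + qm)
    (hap : ap = pp * qp) (hbp : bp = pp + qp)
    (ξ : ℝ) (hξ0 : 0 < ξ) (hξπ : ξ < Real.pi)
    (halg : Complex.exp (2 * Complex.I * (m : ℂ) * (ξ : ℂ)) *
        ((Complex.exp (Complex.I * ξ) - (pm : ℂ)) * (Complex.exp (Complex.I * ξ) - (qm : ℂ)) *
          (Complex.exp (Complex.I * ξ) - (pp : ℂ)) * (Complex.exp (Complex.I * ξ) - (qp : ℂ)))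
      = (1 - (pm : ℂ) * Complex.exp (Complex.I * ξ)) * (1 - (qm : ℂ) * Complex.exp (Complex.I * ξ)) *
          (1 - (pp : ℂ) * Complex.exp (Complex.I * ξ)) * (1 - (qp : ℂ) * Complex.exp (Complex.I * ξ))) :
    ((1 - am) * bs am bm 1 ξ + bm * bs am bm 0 ξ = 2 * Real.cos ξ * bs am bm 0 ξ) ∧
    (∀ l : ℤ, 0 < l → l < (m : ℤ) →
      bs am bm (l + 1) ξ + bs am bm (l - 1) ξ = 2 * Real.cos ξ * bs am bm l ξ) ∧
    ((1 - ap) * bs am bm ((m : ℤ) - 1) ξ + bp * bs am bm (m : ℤ) ξ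
      = 2 * Real.cos ξ * bs am bm (m : ℤ) ξ) := by
  subst ham hbm hap hbp
  refine ⟨?_, fun l _ _ => bs_rec _ _ ξ l, ?_⟩
  · simp [bs]
    ring
  · have hs : Real.sin ξ ≠ 0 := (Real.sin_pos_of_pos_of_lt_pi hξ0 hξπ).ne'
    have hu := Polynomial.Chebyshev.U_real_cos ξ (m : ℤ)
    have hv := Polynomial.Chebyshev.U_real_cos ξ ((m : ℤ) - 1)
    have r1 := U_rec ξ ((m : ℤ) - 1)
    have r2 := U_rec ξ ((m : ℤ) - 2)
    -- `sin x = (e^{ix} - e^{-ix}) / 2i`, with `e^{-ix}` written as an inverse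
    have hsin (x : ℝ) : 2 * Complex.I * (Real.sin x : ℂ)
        = Complex.exp (Complex.I * x) - (Complex.exp (Complex.I * x))⁻¹ := by
      rw [← Complex.exp_neg, Complex.ofReal_sin, Complex.sin]
      ring_nf
      rw [Complex.I_sq]
      ring_nf
    have hcos : 2 * (Real.cos ξ : ℂ)
        = Complex.exp (Complex.I * ξ) + (Complex.exp (Complex.I * ξ))⁻¹ := by
      rw [← Complex.exp_neg, Complex.ofReal_cos, Complex.cos]
      ring_nf
    have key := boundary_algebra (z := Complex.exp (Complex.I * ξ))
      (Z := Complex.exp (Complex.I * ((m * ξ : ℝ) : ℂ))) (c := (Real.cos ξ : ℂ))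
      (s := (Real.sin ξ : ℂ))
      (u := (((Polynomial.Chebyshev.U ℝ m).eval (Real.cos ξ) : ℝ) : ℂ))
      (v := (((Polynomial.Chebyshev.U ℝ (m - 1)).eval (Real.cos ξ) : ℝ) : ℂ))
      (p := pm) (q := qm) (p' := pp) (q' := qp)
      (Complex.exp_ne_zero _) (Complex.exp_ne_zero _) (by exact_mod_cast hs) hcos
      (by
        rw [← Complex.ofReal_mul, hu, hsin, ← mul_inv, ← Complex.exp_add]
        push_cast
        ring_nf)
      (by
        rw [← Complex.ofReal_mul, hv, hsin]
        push_cast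
        ring_nf)
      (by
        rw [← halg, ← Complex.exp_nat_mul]
        push_cast
        ring_nf)
    generalize hU : (Polynomial.Chebyshev.U ℝ m).eval (Real.cos ξ) = u at key
    generalize hV : (Polynomial.Chebyshev.U ℝ (m - 1)).eval (Real.cos ξ) = v at key
    norm_cast at key
    unfold bs
    rw [show (m : ℤ) - 1 + 1 = m by ring, show (m : ℤ) - 1 - 1 = m - 2 by ring, hU, hV] at r1
    rw [show (m : ℤ) - 2 + 1 = m - 1 by ring, show (m : ℤ) - 2 - 1 = m - 3 by ring, hV] at r2
    rw [show (m : ℤ) - 1 - 1 = m - 2 by ring, show (m : ℤ) - 1 - 2 = m - 3 by ring, hU, hV]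
    have hW : (Polynomial.Chebyshev.U ℝ (m - 2)).eval (Real.cos ξ) = 2 * Real.cos ξ * v - u := by
      linarith
    have hX : (Polynomial.Chebyshev.U ℝ (m - 3)).eval (Real.cos ξ)
        = 2 * Real.cos ξ * (2 * Real.cos ξ * v - u) - v := by
      rw [hW] at r2
      linarith
    rw [hW, hX]
    linear_combination -key
end

section
/- Let m ≥ 1, let p_-, q_-, p_+, q_+ ∈ ℝ with -1 < p_± ≤ q_± < 1, set a_± = p_± q_±, b_± = p_± + q_±, let p_l(ξ) := U_l(cos ξ) - b_- U_{l-1}(cos ξ) + a_- U_{l-2}(cos ξ), Δ_l^{(m)} := (1 - a_- δ_{l,0})^{-1}(1 - a_+ δ_{l,m})^{-1}, c(ξ) := (1-p_- e^{-iξ})(1-q_- e^{-iξ})/(1-e^{-2iξ}), and H^{(m)}(ξ) := 2m + ∑ (1-q^2)/(1-2q cos ξ + q^2) where the sum runs over q ∈ {p_-, q_-, p_+, q_+}. Suppose ξ ∈ (0,π) satisfies e^{2imξ}(e^{iξ}-p_-)(e^{iξ}-q_-)(e^{iξ}-p_+)(e^{iξ}-q_+) = (1-p_- e^{iξ})(1-q_-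 e^{iξ})(1-p_+ e^{iξ})(1-q_+ e^{iξ}). Then ∑_{l=0}^{m} p_l(ξ)^2 Δ_l^{(m)} = c(ξ) c(-ξ) H^{(m)}(ξ) (an identity in ℂ whose both sides are real). -/
/-- `H^{(m)}(ξ) = 2m + Σ_{q ∈ {p₋,q₋,p₊,q₊}} (1-q²)/(1-2q cos ξ + q²)`. -/
noncomputable def Hw (m : ℕ) (pm qm pp qp : ℝ) (ξ : ℝ) : ℝ :=
  2*(m:ℝ) + (1 - pm^2) / (1 - 2*pm*Real.cos ξ + pm^2)
    + (1 - qm^2) / (1 - 2*qm*Real.cos ξ + qm^2)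
    + (1 - pp^2) / (1 - 2*pp*Real.cos ξ + pp^2)
    + (1 - qp^2) / (1 - 2*qp*Real.cos ξ + qp^2)

/-- Exponential form of `U_l(cos ξ)`, in the variable `z = e^{iξ}` and free of denominators. -/
lemma U_exp_form (l : ℤ) (ξ : ℝ) (z : ℂ) (hz : z = Complex.exp (Complex.I * ξ)) :
    (((Polynomial.Chebyshev.U ℝ l).eval (Real.cos ξ) : ℝ) : ℂ) * (z - z⁻¹)
      = z ^ (l + 1) - z⁻¹ ^ (l + 1) := by
  have h := congrArg (fun x : ℝ => (x : ℂ)) (Polynomial.Chebyshev.U_real_cos ξ l)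
  rw [Complex.ofReal_mul, Complex.ofReal_sin, Complex.ofReal_sin] at h
  have hzi : z⁻¹ = Complex.exp (-(Complex.I * ξ)) := by rw [hz, Complex.exp_neg]
  have hs : z - z⁻¹ = 2 * Complex.I * Complex.sin ξ := by
    rw [hzi, hz, Complex.sin]
    rw [show -(ξ : ℂ) * Complex.I = -(Complex.I * ξ) by ring,
      show (ξ : ℂ) * Complex.I = Complex.I * ξ by ring]
    linear_combination -(Complex.exp (-(Complex.I * ξ)) - Complex.exp (Complex.I * ξ))
      * Complex.I_mul_I
  have hs2 : z ^ (l + 1) - z⁻¹ ^ (l + 1)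
      = 2 * Complex.I * Complex.sin (((l + 1 : ℝ) * ξ : ℝ)) := by
    rw [hzi, hz, ← Complex.exp_int_mul, ← Complex.exp_int_mul, Complex.sin]
    push_cast
    rw [show -(((l : ℂ) + 1) * (ξ : ℂ)) * Complex.I = ((l : ℂ) + 1) * -(Complex.I * ξ) by ring,
      show ((l : ℂ) + 1) * (ξ : ℂ) * Complex.I = ((l : ℂ) + 1) * (Complex.I * ξ) by ring]
    linear_combination -(Complex.exp (((l : ℂ) + 1) * -(Complex.I * ξ))
      - Complex.exp (((l : ℂ) + 1) * (Complex.I * ξ))) * Complex.I_mul_I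
  rw [hs, hs2, ← h]
  ring

/-- The value `c = (1-p/z)(1-q/z)/(1-z⁻²)` of the amplitude, in the variable `z = e^{iξ}`. -/
noncomputable def amp (p q z : ℂ) : ℂ := (1 - p * z⁻¹) * (1 - q * z⁻¹) / (1 - (z⁻¹) ^ 2)

lemma cAmp_eq_amp (p q ξ : ℝ) (z : ℂ) (hz : z = Complex.exp (Complex.I * ξ)) :
    cAmp p q ξ = amp p q z := by
  have h1 : Complex.exp (-Complex.I * ξ) = z⁻¹ := by rw [hz, ← Complex.exp_neg, neg_mul]
  have h2 : Complex.exp (-2 * Complex.I * ξ) = (z⁻¹) ^ 2 := by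
    rw [← h1, ← Complex.exp_nat_mul]; congr 1; push_cast; ring
  rw [cAmp, amp, h1, h2]

/-- The two-exponential form `p_l = c(ξ) z^l + c(-ξ) z^{-l}` with `z = e^{iξ}`. -/
lemma bs_eq (p q : ℝ) (l : ℕ) (ξ : ℝ) (z : ℂ) (hz : z = Complex.exp (Complex.I * ξ))
    (hz2 : z ^ 2 ≠ 1) :
    (bs (p * q) (p + q) (l : ℤ) ξ : ℂ) = amp p q z * z ^ l + amp p q z⁻¹ * z⁻¹ ^ l := by
  have hz0 : z ≠ 0 := by rw [hz]; exact Complex.exp_ne_zero _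
  have hw0 : z⁻¹ ≠ 0 := inv_ne_zero hz0
  have hd : z ^ 2 - 1 ≠ 0 := sub_ne_zero.2 hz2
  have hd' : 1 - z ^ 2 ≠ 0 := sub_ne_zero.2 (Ne.symm hz2)
  have hzw : z - z⁻¹ ≠ 0 := by
    intro h
    apply hd
    linear_combination z * h + mul_inv_cancel₀ hz0
  have u0 := U_exp_form l ξ z hz
  have u1 := U_exp_form (l - 1) ξ z hz
  have u2 := U_exp_form (l - 2) ξ z hz
  rw [sub_add_cancel] at u1
  rw [show (l : ℤ) - 2 + 1 = l - 1 by ring, zpow_sub_one₀ hz0, zpow_sub_one₀ hw0] at u2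
  rw [zpow_add_one₀ hz0, zpow_add_one₀ hw0] at u0
  simp only [zpow_natCast, inv_inv] at u0 u1 u2
  apply mul_right_cancel₀ hzw
  have e : (bs (p * q) (p + q) (l : ℤ) ξ : ℂ) * (z - z⁻¹)
      = (z ^ l * z - z⁻¹ ^ l * z⁻¹) - (p + q) * (z ^ l - z⁻¹ ^ l)
        + p * q * (z ^ l * z⁻¹ - z⁻¹ ^ l * z) := by
    rw [bs]
    push_cast at u0 u1 u2 ⊢
    linear_combination u0 - (p + q : ℂ) * u1 + (p * q : ℂ) * u2
  have hA : amp p q z * (z - z⁻¹) = z - (p + q) + p * q * z⁻¹ := by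
    rw [amp]; field_simp; ring
  have hB : amp p q z⁻¹ * (z - z⁻¹) = -(z⁻¹ - (p + q) + p * q * z) := by
    rw [amp, inv_inv]; field_simp; ring
  rw [e]
  linear_combination -(z ^ l) * hA - z⁻¹ ^ l * hB

lemma sum_sq (A B z : ℂ) (hz0 : z ≠ 0) (hz2 : z ^ 2 ≠ 1) (n : ℕ) :
    ∑ l ∈ Finset.range n, (A * z ^ (l + 1) + B * z⁻¹ ^ (l + 1)) ^ 2
      = 2 * n * (A * B) + A ^ 2 * ((z ^ (n + 1)) ^ 2 - z ^ 2) / (z ^ 2 - 1)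
        + B ^ 2 * (z ^ 2 * (z⁻¹ ^ (n + 1)) ^ 2 - 1) / (1 - z ^ 2) := by
  have hd : z ^ 2 - 1 ≠ 0 := sub_ne_zero.2 hz2
  have hd' : 1 - z ^ 2 ≠ 0 := sub_ne_zero.2 (Ne.symm hz2)
  induction n with
  | zero => simp [hz0]
  | succ n ih =>
    rw [Finset.sum_range_succ, ih]
    have h1 : z⁻¹ ^ (n + 1) = (z ^ (n + 1))⁻¹ := inv_pow _ _
    have h2 : z⁻¹ ^ (n + 1 + 1) = (z ^ (n + 1))⁻¹ * z⁻¹ := by rw [pow_succ, h1]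
    have h3 : z ^ (n + 1 + 1) = z ^ (n + 1) * z := pow_succ _ _
    have hy : z ^ (n + 1) ≠ 0 := pow_ne_zero _ hz0
    rw [h1, h2, h3]
    generalize z ^ (n + 1) = y at *
    push_cast
    have hE : 1 - z ^ 2 = -(z ^ 2 - 1) := by ring
    rw [hE]
    field_simp
    ring

/-- The contribution of the end `l = 0`: the two Poisson kernels of `p₋, q₋`. -/
lemma left_boundary (p q z : ℂ) (hz0 : z ≠ 0) (hz2 : z ^ 2 ≠ 1)
    (hp : 1 - p * z ≠ 0) (hp' : z - p ≠ 0) (hq : 1 - q * z ≠ 0) (hq' : z - q ≠ 0) :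
    1 - p * q - amp p q z ^ 2 * z ^ 2 / (z ^ 2 - 1) - amp p q z⁻¹ ^ 2 / (1 - z ^ 2)
      = amp p q z * amp p q z⁻¹ * (1 + (1 - p ^ 2) * z / ((1 - p * z) * (z - p))
          + (1 - q ^ 2) * z / ((1 - q * z) * (z - q))) := by
  have hd : z ^ 2 - 1 ≠ 0 := sub_ne_zero.2 hz2
  have hA : amp p q z = (z - p) * (z - q) / (z ^ 2 - 1) := by
    rw [amp]; field_simp
  have hB : amp p q z⁻¹ = -((1 - p * z) * (1 - q * z) / (z ^ 2 - 1)) := by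
    have hd' : 1 - z ^ 2 ≠ 0 := sub_ne_zero.2 (Ne.symm hz2)
    rw [amp, inv_inv]; field_simp; ring
  rw [hA, hB, show 1 - z ^ 2 = -(z ^ 2 - 1) by ring]
  field_simp
  ring

/-- The contribution of the end `l = m`: the two Poisson kernels of `p₊, q₊`. Here `y = z^m`, and
`h` is the equation satisfied by `ξ`, after division by a common factor. -/
lemma right_boundary (A B p q z y : ℂ) (hz2 : z ^ 2 ≠ 1) (hy : y ≠ 0)
    (hpq : 1 - p * q ≠ 0)
    (hp : 1 - p * z ≠ 0) (hp' : z - p ≠ 0) (hq : 1 - q * z ≠ 0) (hq' : z - q ≠ 0)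
    (h : A * y ^ 2 * ((z - p) * (z - q)) = -(B * ((1 - p * z) * (1 - q * z)))) :
    A ^ 2 * y ^ 2 / (z ^ 2 - 1) + B ^ 2 * (z ^ 2 * y⁻¹ ^ 2) / (1 - z ^ 2)
        + (A * y + B * y⁻¹) ^ 2 * (1 - p * q)⁻¹
      = A * B * (1 + (1 - p ^ 2) * z / ((1 - p * z) * (z - p))
          + (1 - q ^ 2) * z / ((1 - q * z) * (z - q))) := by
  have hd : z ^ 2 - 1 ≠ 0 := sub_ne_zero.2 hz2
  have hp2 : 1 - z * p ≠ 0 := by rwa [mul_comm]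
  have hq2 : 1 - z * q ≠ 0 := by rwa [mul_comm]
  have e1 : A ^ 2 * y ^ 2 = -(A * B * ((1 - p * z) * (1 - q * z) / ((z - p) * (z - q)))) := by
    field_simp
    linear_combination A * h
  have e2 : B ^ 2 * y⁻¹ ^ 2 = -(A * B * ((z - p) * (z - q) / ((1 - p * z) * (1 - q * z)))) := by
    field_simp
    linear_combination B * h
  have e3 : (A * y + B * y⁻¹) ^ 2 = A ^ 2 * y ^ 2 + B ^ 2 * y⁻¹ ^ 2 + 2 * (A * B) := by
    field_simp
    ring
  rw [e3, show B ^ 2 * (z ^ 2 * y⁻¹ ^ 2) = z ^ 2 * (B ^ 2 * y⁻¹ ^ 2) by ring, e1, e2,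
    show 1 - z ^ 2 = -(z ^ 2 - 1) by ring]
  generalize A * B = C
  field_simp
  ring

lemma sub_ne_zero_of_abs_lt (q : ℝ) (z : ℂ) (hz : ‖z‖ = 1) (h1 : -1 < q) (h2 : q < 1) :
    z - (q : ℂ) ≠ 0 ∧ 1 - (q : ℂ) * z ≠ 0 := by
  have hq : ‖(q : ℂ)‖ < 1 := by
    rw [Complex.norm_real, Real.norm_eq_abs]; exact abs_lt.2 ⟨h1, h2⟩
  constructor <;> intro h
  · rw [← sub_eq_zero.1 h, hz] at hq
    exact lt_irrefl _ hq
  · have := congrArg norm (sub_eq_zero.1 h)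
    rw [norm_mul, hz, norm_one, mul_one] at this
    exact hq.ne this.symm

/-- The Poisson kernel, rewritten in the variable `z = e^{iξ}`. -/
lemma poisson_eq (q ξ : ℝ) (z : ℂ) (hz : z = Complex.exp (Complex.I * ξ)) :
    (1 - (q : ℂ) ^ 2) / (1 - 2 * q * Complex.cos ξ + q ^ 2)
      = (1 - (q : ℂ) ^ 2) * z / ((1 - q * z) * (z - q)) := by
  have hz0 : z ≠ 0 := by rw [hz]; exact Complex.exp_ne_zero _
  have hzi : z⁻¹ = Complex.exp (-(Complex.I * ξ)) := by rw [hz, Complex.exp_neg]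
  have hc : 2 * Complex.cos ξ = z + z⁻¹ := by
    rw [Complex.two_cos, hzi, hz, neg_mul, mul_comm]
  have : (1 - q * z) * (z - q) = (1 - 2 * q * Complex.cos ξ + (q : ℂ) ^ 2) * z := by
    have hzz : z * z⁻¹ = 1 := mul_inv_cancel₀ hz0
    linear_combination (q : ℂ) * z * hc + (q : ℂ) * hzz
  rw [this, mul_div_mul_right _ _ hz0]

theorem stmt12 (m : ℕ) (hm : 1 ≤ m) (pm qm pp qp : ℝ)
    (h1 : -1 < pm) (h2 : pm ≤ qm) (h3 : qm < 1)
    (h4 : -1 < pp) (h5 : pp ≤ qp) (h6 : qp < 1)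
    (am bm ap bp : ℝ) (ham : am = pm * qm) (hbm : bm = pm + qm)
    (hap : ap = pp * qp) (hbp : bp = pp + qp)
    (ξ : ℝ) (hξ0 : 0 < ξ) (hξπ : ξ < Real.pi)
    (halg : Complex.exp (2 * Complex.I * (m : ℂ) * (ξ : ℂ)) *
        ((Complex.exp (Complex.I * ξ) - (pm : ℂ)) * (Complex.exp (Complex.I * ξ) - (qm : ℂ)) *
          (Complex.exp (Complex.I * ξ) - (pp : ℂ)) * (Complex.exp (Complex.I * ξ) - (qp : ℂ)))
      = (1 - (pm : ℂ) * Complex.exp (Complex.I * ξ)) * (1 - (qm : ℂ) * Complex.exp (Complex.I * ξ)) *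
          (1 - (pp : ℂ) * Complex.exp (Complex.I * ξ)) * (1 - (qp : ℂ) * Complex.exp (Complex.I * ξ))) :
    ((∑ l : Fin (m+1),
        (bs am bm ((l : ℕ) : ℤ) ξ)^2 *
          ((1 - am * (if (l : ℕ) = 0 then 1 else 0))⁻¹ *
            (1 - ap * (if (l : ℕ) = m then 1 else 0))⁻¹) : ℝ) : ℂ)
      = cAmp pm qm ξ * cAmp pm qm (-ξ) * ((Hw m pm qm pp qp ξ : ℝ) : ℂ) := by
  subst ham hbm hap hbp
  obtain ⟨z, hz⟩ : ∃ z, z = Complex.exp (Complex.I * ξ) := ⟨_, rfl⟩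
  have hz0 : z ≠ 0 := by rw [hz]; exact Complex.exp_ne_zero _
  have hz1 : ‖z‖ = 1 := by rw [hz, mul_comm]; exact Complex.norm_exp_ofReal_mul_I ξ
  have hzi : z⁻¹ = Complex.exp (Complex.I * ((-ξ : ℝ) : ℂ)) := by
    rw [hz, ← Complex.exp_neg]; congr 1; push_cast; ring
  have hz2 : z ^ 2 ≠ 1 := by
    intro h
    have him : z.im = Real.sin ξ := by
      rw [hz, mul_comm, Complex.exp_ofReal_mul_I_im]
    have hpos := Real.sin_pos_of_pos_of_lt_pi hξ0 hξπ
    rcases eq_or_eq_neg_of_sq_eq_sq z 1 (by rw [h, one_pow]) with h | h <;> rw [h] at him <;> simp at him <;> linarith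
  have hexp : Complex.exp (2 * Complex.I * (m : ℂ) * (ξ : ℂ)) = (z ^ m) ^ 2 := by
    rw [hz, ← Complex.exp_nat_mul, ← Complex.exp_nat_mul]; congr 1; push_cast; ring
  rw [hexp, ← hz] at halg
  obtain ⟨a1, a2⟩ := sub_ne_zero_of_abs_lt pm z hz1 h1 (h2.trans_lt h3)
  obtain ⟨b1, b2⟩ := sub_ne_zero_of_abs_lt qm z hz1 (h1.trans_le h2) h3
  obtain ⟨c1, c2⟩ := sub_ne_zero_of_abs_lt pp z hz1 h4 (h5.trans_lt h6)
  obtain ⟨d1, d2⟩ := sub_ne_zero_of_abs_lt qp z hz1 (h4.trans_le h5) h6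
  have hd : z ^ 2 - 1 ≠ 0 := sub_ne_zero.2 hz2
  have hd' : 1 - z ^ 2 ≠ 0 := sub_ne_zero.2 (Ne.symm hz2)
  have hprod : ∀ p q : ℝ, -1 < p → p ≤ q → q < 1 → 1 - p * q ≠ 0 := by
    intro p q u v w
    have : p * q < 1 := by nlinarith [mul_pos (sub_pos.2 u) (sub_pos.2 w)]
    linarith
  have hpm := hprod pm qm h1 h2 h3
  have hpp : (1 : ℂ) - pp * qp ≠ 0 := by exact_mod_cast hprod pp qp h4 h5 h6
  rw [cAmp_eq_amp pm qm ξ z hz, cAmp_eq_amp pm qm (-ξ) z⁻¹ hzi]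
  have hrel : amp pm qm z * (z ^ m) ^ 2 * ((z - pp) * (z - qp))
      = -(amp pm qm z⁻¹ * ((1 - pp * z) * (1 - qp * z))) := by
    rw [amp, amp, inv_inv]
    field_simp
    linear_combination (1 - z ^ 2) * halg
  have hL := left_boundary pm qm z hz0 hz2 a2 a1 b2 b1
  have hR := right_boundary (amp pm qm z) (amp pm qm z⁻¹) pp qp z (z ^ m) hz2
    (pow_ne_zero _ hz0) hpp c2 c1 d2 d1 hrel
  obtain ⟨n, rfl⟩ : ∃ n, m = n + 1 := ⟨m - 1, by omega⟩
  have hS := sum_sq (amp pm qm z) (amp pm qm z⁻¹) z hz0 hz2 n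
  have hb : ∀ l : ℕ, (bs (pm * qm) (pm + qm) (l : ℤ) ξ : ℂ) = _ :=
    fun l => bs_eq pm qm l ξ z hz hz2
  have hb0 : bs (pm * qm) (pm + qm) ((0 : ℕ) : ℤ) ξ = 1 - pm * qm := by
    simp [bs]
    ring
  -- the terms `l = 0` and `l = m` are the ones with a nontrivial weight
  have hsum : ∑ l : Fin (n + 1 + 1), (bs (pm * qm) (pm + qm) ((l : ℕ) : ℤ) ξ) ^ 2 *
          ((1 - pm * qm * (if (l : ℕ) = 0 then 1 else 0))⁻¹ *
            (1 - pp * qp * (if (l : ℕ) = n + 1 then 1 else 0))⁻¹)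
      = (1 - pm * qm) + ∑ l ∈ Finset.range n, (bs (pm * qm) (pm + qm) ((l + 1 : ℕ) : ℤ) ξ) ^ 2
        + (bs (pm * qm) (pm + qm) ((n + 1 : ℕ) : ℤ) ξ) ^ 2 * (1 - pp * qp)⁻¹ := by
    rw [Fin.sum_univ_eq_sum_range (fun l : ℕ => (bs (pm * qm) (pm + qm) (l : ℤ) ξ) ^ 2 *
          ((1 - pm * qm * (if l = 0 then 1 else 0))⁻¹ *
            (1 - pp * qp * (if l = n + 1 then 1 else 0))⁻¹)), Finset.sum_range_succ,
      Finset.sum_range_succ', hb0]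
    have : ∀ l ∈ Finset.range n, (bs (pm * qm) (pm + qm) ((l + 1 : ℕ) : ℤ) ξ) ^ 2 *
          ((1 - pm * qm * (if l + 1 = 0 then 1 else 0))⁻¹ *
            (1 - pp * qp * (if l + 1 = n + 1 then 1 else 0))⁻¹)
        = (bs (pm * qm) (pm + qm) ((l + 1 : ℕ) : ℤ) ξ) ^ 2 := by
      intro l hl
      have : l ≠ n := (Finset.mem_range.1 hl).ne
      simp [this]
    rw [Finset.sum_congr rfl this]
    have h0 : (1 - pm * qm) ^ 2 * (1 - pm * qm)⁻¹ = 1 - pm * qm := by field_simp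
    simp [h0]
    ring
  rw [hsum]
  -- the index casts stay inside `P`, out of reach of `push_cast`
  obtain ⟨P, hP⟩ : ∃ P : ℕ → ℝ, ∀ l : ℕ, bs (pm * qm) (pm + qm) (l : ℤ) ξ = P l :=
    ⟨_, fun _ => rfl⟩
  simp only [hP] at hb ⊢
  rw [Hw]
  push_cast
  simp only [hb]
  rw [hS, poisson_eq pm ξ z hz, poisson_eq qm ξ z hz, poisson_eq pp ξ z hz, poisson_eq qp ξ z hz]
  rw [← inv_pow] at hR
  linear_combination hL + hR
end

section
/- Let m ≥ 1, let p_-, q_-, p_+, q_+ ∈ ℝ with -1 < p_± ≤ q_± < 1, and keep the notations a_±, b_±, p_l, ξ_l̂^{(m)}, Δ_l^{(m)}, c, H^{(m)}, Δ̂_l̂^{(m)} as below. Then Δ̂_l̂^{(m)} > 0 for every 0 ≤ l̂ ≤ m, and the real (m+1)×(m+1) matrix Ψ^{(m)} with entries Ψ^{(m)}_{l̂,l} := √(Δ̂_l̂^{(m)} Δ_l^{(m)}) · p_l(ξ_l̂^{(m)}) is orthogonal, i.e. Ψ^{(m)} (Ψ^{(m)})^T = Id and (Ψ^{(m)})^T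 Ψ^{(m)} = Id. -/
/-- The weights `Δ_l^{(m)} = (1 - a₋δ_{l,0})⁻¹(1 - a₊δ_{l,m})⁻¹`. -/
noncomputable def Δw (m : ℕ) (am ap : ℝ) (l : Fin (m+1)) : ℝ :=
  (1 - am * (if (l : ℕ) = 0 then 1 else 0))⁻¹ * (1 - ap * (if (l : ℕ) = m then 1 else 0))⁻¹

/-- The Plancherel weights `Δ̂_l̂^{(m)} = 1/(c(ξ_l̂)c(-ξ_l̂)H^{(m)}(ξ_l̂))` (a real quantity,
here rendered via the real part of `c(ξ_l̂)c(-ξ_l̂)`). -/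
noncomputable def Δhat (m : ℕ) (pm qm pp qp : ℝ) (ξhat : Fin (m+1) → ℝ) (lh : Fin (m+1)) : ℝ :=
  ((cAmp pm qm (ξhat lh) * cAmp pm qm (-(ξhat lh))).re * Hw m pm qm pp qp (ξhat lh))⁻¹

/-- The kernel matrix `Ψ^{(m)}_{l̂,l} = √(Δ̂_l̂ Δ_l) p_l(ξ_l̂)`. -/
noncomputable def Psi (m : ℕ) (pm qm pp qp am bm ap : ℝ) (ξhat : Fin (m+1) → ℝ) :
    Matrix (Fin (m+1)) (Fin (m+1)) ℝ :=
  Matrix.of fun lh l =>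
    Real.sqrt (Δhat m pm qm pp qp ξhat lh * Δw m am ap l) * bs am bm ((l : ℕ) : ℤ) (ξhat lh)

/-! ### Phases and moduli of `1 - q e^{-iξ}` -/

/-- The phase `θ_q(ξ) = arg (1 - q e^{-iξ})`, written with `arctan` because for `|q| < 1` the number
`1 - q e^{-iξ}` lies in the right half-plane. -/
noncomputable def phase (q ξ : ℝ) : ℝ :=
  Real.arctan (q * Real.sin ξ / (1 - q * Real.cos ξ))

/-- The modulus `|1 - q e^{-iξ}|`. -/
noncomputable def modulus (q ξ : ℝ) : ℝ :=
  Real.sqrt (1 - 2*q*Real.cos ξ + q^2)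

lemma one_sub_mul_cos_pos_s14 {q : ℝ} (hl : -1 < q) (hr : q < 1) (ξ : ℝ) :
    0 < 1 - q * Real.cos ξ := by
  have h : |q * Real.cos ξ| < 1 := by
    rw [abs_mul]
    calc |q| * |Real.cos ξ| ≤ |q| * 1 :=
          mul_le_mul_of_nonneg_left (Real.abs_cos_le_one ξ) (abs_nonneg q)
      _ < 1 := by rw [mul_one]; exact abs_lt.2 ⟨hl, hr⟩
  linarith [(abs_lt.1 h).2]

lemma modulus_radicand_pos {q : ℝ} (hl : -1 < q) (hr : q < 1) (ξ : ℝ) :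
    0 < 1 - 2*q*Real.cos ξ + q^2 := by
  nlinarith [one_sub_mul_cos_pos_s14 hl hr ξ, Real.sin_sq_add_cos_sq ξ, sq_nonneg (q * Real.sin ξ),
    pow_pos (one_sub_mul_cos_pos_s14 hl hr ξ) 2]

lemma modulus_pos {q : ℝ} (hl : -1 < q) (hr : q < 1) (ξ : ℝ) : 0 < modulus q ξ :=
  Real.sqrt_pos.2 (modulus_radicand_pos hl hr ξ)

lemma modulus_sq {q : ℝ} (hl : -1 < q) (hr : q < 1) (ξ : ℝ) :
    modulus q ξ ^ 2 = 1 - 2*q*Real.cos ξ + q^2 :=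
  Real.sq_sqrt (modulus_radicand_pos hl hr ξ).le

lemma modulus_eq {q : ℝ} (hl : -1 < q) (hr : q < 1) (ξ : ℝ) :
    modulus q ξ = (1 - q * Real.cos ξ) *
      Real.sqrt (1 + (q * Real.sin ξ / (1 - q * Real.cos ξ)) ^ 2) := by
  have hA := one_sub_mul_cos_pos_s14 hl hr ξ
  rw [← Real.sqrt_sq hA.le, ← Real.sqrt_mul (sq_nonneg _), modulus, Real.sqrt_sq hA.le]
  congr 1
  field_simp
  linear_combination (-q^2) * Real.sin_sq_add_cos_sq ξ

lemma modulus_mul_cos_phase {q : ℝ} (hl : -1 < q) (hr : q < 1) (ξ : ℝ) :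
    modulus q ξ * Real.cos (phase q ξ) = 1 - q * Real.cos ξ := by
  rw [modulus_eq hl hr, phase, Real.cos_arctan]
  have : 0 < Real.sqrt (1 + (q * Real.sin ξ / (1 - q * Real.cos ξ)) ^ 2) :=
    Real.sqrt_pos.2 (by positivity)
  field_simp

lemma modulus_mul_sin_phase {q : ℝ} (hl : -1 < q) (hr : q < 1) (ξ : ℝ) :
    modulus q ξ * Real.sin (phase q ξ) = q * Real.sin ξ := by
  have hA := one_sub_mul_cos_pos_s14 hl hr ξ
  rw [modulus_eq hl hr, phase, Real.sin_arctan]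
  have : 0 < Real.sqrt (1 + (q * Real.sin ξ / (1 - q * Real.cos ξ)) ^ 2) :=
    Real.sqrt_pos.2 (by positivity)
  field_simp

/-- Imaginary part of `e^{iφ} (1 - q e^{-iξ})`: multiplying by `1 - q e^{-iξ}` turns the combination
`sin φ - q sin (φ - ξ)` into a single phase-shifted sine. -/
lemma modulus_mul_sin_add_phase {q : ℝ} (hl : -1 < q) (hr : q < 1) (ξ φ : ℝ) :
    modulus q ξ * Real.sin (φ + phase q ξ) = Real.sin φ - q * Real.sin (φ - ξ) := by
  rw [Real.sin_add, Real.sin_sub]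
  linear_combination Real.sin φ * modulus_mul_cos_phase hl hr ξ +
    Real.cos φ * modulus_mul_sin_phase hl hr ξ

/-- The two-parameter version of `modulus_mul_sin_add_phase`, for `(1 - p e^{-iξ}) (1 - q e^{-iξ})`. -/
lemma modulus_mul_sin_add_phase₂ {p q : ℝ} (hpl : -1 < p) (hpr : p < 1) (hql : -1 < q)
    (hqr : q < 1) (ξ φ : ℝ) :
    modulus p ξ * modulus q ξ * Real.sin (φ + phase p ξ + phase q ξ)
      = Real.sin φ - (p + q) * Real.sin (φ - ξ) + p * q * Real.sin (φ - 2 * ξ) := by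
  have e1 := modulus_mul_sin_add_phase hql hqr ξ (φ + phase p ξ)
  have e2 := modulus_mul_sin_add_phase hpl hpr ξ φ
  have e3 := modulus_mul_sin_add_phase hpl hpr ξ (φ - ξ)
  rw [show φ + phase p ξ - ξ = φ - ξ + phase p ξ by ring] at e1
  rw [show φ - ξ - ξ = φ - 2 * ξ by ring] at e3
  linear_combination modulus p ξ * e1 + e2 - q * e3

lemma hasDerivAt_phase {q : ℝ} (hl : -1 < q) (hr : q < 1) (ξ : ℝ) :
    HasDerivAt (phase q) (((1 - q^2) / (1 - 2*q*Real.cos ξ + q^2) - 1) / 2) ξ := by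
  have hA := one_sub_mul_cos_pos_s14 hl hr ξ
  have hD := modulus_radicand_pos hl hr ξ
  have h := ((((Real.hasDerivAt_sin ξ).const_mul q).fun_div
    (((Real.hasDerivAt_cos ξ).const_mul q).const_sub 1) hA.ne')).arctan
  refine h.congr_deriv ?_
  have hx : 1 + (q * Real.sin ξ / (1 - q * Real.cos ξ)) ^ 2
      = (1 - 2*q*Real.cos ξ + q^2) / (1 - q * Real.cos ξ) ^ 2 := by
    field_simp
    linear_combination q^2 * Real.sin_sq_add_cos_sq ξ
  rw [hx]
  field_simp
  linear_combination (-2 * q^2) * Real.sin_sq_add_cos_sq ξ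

lemma v_eq_s14 {q : ℝ} (hl : -1 < q) (hr : q < 1) (ξ : ℝ) : v q ξ = ξ + 2 * phase q ξ := by
  have hd : ∀ x ∈ Set.uIcc 0 ξ, HasDerivAt (fun y => y + 2 * phase q y)
      ((1 - q^2) / (1 - 2*q*Real.cos x + q^2)) x := fun x _ =>
    ((hasDerivAt_id x).add ((hasDerivAt_phase hl hr x).const_mul 2)).congr_deriv (by ring)
  have hc : Continuous fun x => (1 - q^2) / (1 - 2*q*Real.cos x + q^2) :=
    continuous_const.div (by fun_prop) fun x => (modulus_radicand_pos hl hr x).ne'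
  rw [v, intervalIntegral.integral_eq_sub_of_hasDerivAt hd (hc.intervalIntegrable _ _)]
  simp [phase]

/-! ### The total phase and its monotonicity -/

/-- The total phase: half the left-hand side of the equation defining the nodes, after evaluating
the integrals `v_q`. -/
noncomputable def totalPhase (m : ℕ) (pm qm pp qp ξ : ℝ) : ℝ :=
  ((m:ℝ) + 2) * ξ + phase pm ξ + phase qm ξ + phase pp ξ + phase qp ξ

section Nodes

variable {m : ℕ} {pm qm pp qp : ℝ}

lemma Hw_pos (hm : 1 ≤ m) (hpm : -1 < pm) (hpm' : pm < 1) (hqm : -1 < qm) (hqm' : qm < 1)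
    (hpp : -1 < pp) (hpp' : pp < 1) (hqp : -1 < qp) (hqp' : qp < 1) (ξ : ℝ) :
    0 < Hw m pm qm pp qp ξ := by
  have h : ∀ {q : ℝ}, -1 < q → q < 1 → 0 < (1 - q^2) / (1 - 2*q*Real.cos ξ + q^2) :=
    fun hl hr => div_pos (by nlinarith) (modulus_radicand_pos hl hr ξ)
  have hm' : (1:ℝ) ≤ m := by exact_mod_cast hm
  unfold Hw
  linarith [h hpm hpm', h hqm hqm', h hpp hpp', h hqp hqp']

lemma hasDerivAt_totalPhase (hpm : -1 < pm) (hpm' : pm < 1) (hqm : -1 < qm) (hqm' : qm < 1)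
    (hpp : -1 < pp) (hpp' : pp < 1) (hqp : -1 < qp) (hqp' : qp < 1) (ξ : ℝ) :
    HasDerivAt (totalPhase m pm qm pp qp) (Hw m pm qm pp qp ξ / 2) ξ := by
  have h := (((((hasDerivAt_id ξ).const_mul ((m:ℝ) + 2)).add (hasDerivAt_phase hpm hpm' ξ)).add
    (hasDerivAt_phase hqm hqm' ξ)).add (hasDerivAt_phase hpp hpp' ξ)).add
    (hasDerivAt_phase hqp hqp' ξ)
  exact h.congr_deriv (by unfold Hw; ring)

lemma strictMono_totalPhase (hm : 1 ≤ m) (hpm : -1 < pm) (hpm' : pm < 1) (hqm : -1 < qm)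
    (hqm' : qm < 1) (hpp : -1 < pp) (hpp' : pp < 1) (hqp : -1 < qp) (hqp' : qp < 1) :
    StrictMono (totalPhase m pm qm pp qp) := by
  refine strictMono_of_deriv_pos fun ξ => ?_
  rw [(hasDerivAt_totalPhase hpm hpm' hqm hqm' hpp hpp' hqp hqp' ξ).deriv]
  exact half_pos (Hw_pos hm hpm hpm' hqm hqm' hpp hpp' hqp hqp' ξ)

end Nodes

/-! ### The polynomials and the Christoffel–Darboux formula -/

lemma bs_mul_sin (am bm : ℝ) (l : ℤ) (ξ : ℝ) :
    bs am bm l ξ * Real.sin ξ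
      = Real.sin ((l + 1) * ξ) - bm * Real.sin (l * ξ) + am * Real.sin ((l - 1) * ξ) := by
  have h0 := Polynomial.Chebyshev.U_real_cos ξ l
  have h1 := Polynomial.Chebyshev.U_real_cos ξ (l - 1)
  have h2 := Polynomial.Chebyshev.U_real_cos ξ (l - 2)
  push_cast at h1 h2
  rw [show (l:ℝ) - 1 + 1 = l by ring] at h1
  rw [show (l:ℝ) - 2 + 1 = l - 1 by ring] at h2
  unfold bs
  linear_combination h0 - bm * h1 + am * h2

lemma bs_zero (am bm ξ : ℝ) : bs am bm 0 ξ = 1 - am := by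
  have h : Polynomial.Chebyshev.U ℝ (0 - 2) = -1 := Polynomial.Chebyshev.U_neg_two ℝ
  have h' : Polynomial.Chebyshev.U ℝ (0 - 1) = 0 := Polynomial.Chebyshev.U_neg_one ℝ
  simp only [bs, h, h', Polynomial.Chebyshev.U_zero]
  simp
  ring

lemma bs_one (am bm ξ : ℝ) : bs am bm 1 ξ = 2 * Real.cos ξ - bm := by
  have h : Polynomial.Chebyshev.U ℝ (1 - 2) = 0 := Polynomial.Chebyshev.U_neg_one ℝ
  have h' : Polynomial.Chebyshev.U ℝ (1 - 1) = 1 := Polynomial.Chebyshev.U_zero ℝ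
  simp only [bs, h, h', Polynomial.Chebyshev.U_one]
  simp

lemma bs_add_two (am bm : ℝ) (l : ℤ) (ξ : ℝ) :
    bs am bm (l + 2) ξ = 2 * Real.cos ξ * bs am bm (l + 1) ξ - bs am bm l ξ := by
  have h0 := Polynomial.Chebyshev.U_add_two ℝ l
  have h1 := Polynomial.Chebyshev.U_add_two ℝ (l - 1)
  have h2 := Polynomial.Chebyshev.U_add_two ℝ (l - 2)
  simp only [bs]
  rw [show l + 2 - 1 = l - 1 + 2 by ring, show l + 2 - 2 = l - 2 + 2 by ring,
    show l + 1 - 1 = l - 1 + 1 by ring, show l + 1 - 2 = l - 2 + 1 by ring, h0, h1, h2]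
  simp
  ring

lemma differentiable_bs (am bm : ℝ) (l : ℤ) : Differentiable ℝ (bs am bm l) := by
  unfold bs
  have h : ∀ P : Polynomial ℝ, Differentiable ℝ fun ξ => P.eval (Real.cos ξ) :=
    fun P => P.differentiable.comp Real.differentiable_cos
  exact ((h _).sub ((h _).const_mul _)).add ((h _).const_mul _)

/-- The polynomial `p_{m+1} - b₊ p_m + a₊ p_{m-1}`, which vanishes at the nodes
(see `nodePoly_mul_sin`). -/
noncomputable def nodePoly (m : ℕ) (am bm ap bp ξ : ℝ) : ℝ :=
  bs am bm ((m:ℤ) + 1) ξ - bp * bs am bm m ξ + ap * bs am bm ((m:ℤ) - 1) ξ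

/-- The Christoffel–Darboux kernel `Σ_l Δ_l p_l(ξ) p_l(η)`. -/
noncomputable def kernelSum (m : ℕ) (am bm ap ξ η : ℝ) : ℝ :=
  ∑ l : Fin (m+1), Δw m am ap l * (bs am bm ((l:ℕ):ℤ) ξ * bs am bm ((l:ℕ):ℤ) η)

/-- The sum starts with the weight `Δ_0 = (1 - a₋)⁻¹`, which compensates for `p_0 = 1 - a₋`, so that
the telescoping has no boundary term at `l = 0`. -/
lemma christoffel_darboux (am bm ξ η : ℝ) (k : ℕ) :
    2 * (Real.cos ξ - Real.cos η) * ((1 - am)⁻¹ * (bs am bm 0 ξ * bs am bm 0 η)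
      + ∑ i ∈ Finset.range k, bs am bm ((i:ℤ) + 1) ξ * bs am bm ((i:ℤ) + 1) η)
    = bs am bm ((k:ℤ) + 1) ξ * bs am bm k η - bs am bm k ξ * bs am bm ((k:ℤ) + 1) η := by
  induction k with
  | zero =>
    simp only [Finset.range_zero, Finset.sum_empty, Nat.cast_zero, zero_add, bs_zero, bs_one]
    field_simp
    ring
  | succ k ih =>
    rw [Finset.sum_range_succ]
    push_cast
    rw [show (k:ℤ) + 1 + 1 = k + 2 by ring, bs_add_two, bs_add_two]
    linear_combination ih

/-- Off-diagonal Christoffel–Darboux formula for the weights `Δ_l`. -/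
lemma kernelSum_mul (m : ℕ) (hm : 1 ≤ m) (am bm ap bp ξ η : ℝ) (ha' : 1 - ap ≠ 0) :
    2 * (Real.cos ξ - Real.cos η) * (1 - ap) * kernelSum m am bm ap ξ η
      = nodePoly m am bm ap bp ξ * bs am bm m η - bs am bm m ξ * nodePoly m am bm ap bp η := by
  -- Since `m ≥ 1`, the boundary weights at `l = 0` and `l = m` sit at different indices.
  obtain ⟨k, rfl⟩ : ∃ k, m = k + 1 := ⟨m - 1, by omega⟩
  have hS : kernelSum (k+1) am bm ap ξ η = ((1 - am)⁻¹ * (bs am bm 0 ξ * bs am bm 0 η)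
      + ∑ i ∈ Finset.range k, bs am bm ((i:ℤ) + 1) ξ * bs am bm ((i:ℤ) + 1) η)
      + (1 - ap)⁻¹ * (bs am bm ((k:ℤ) + 1) ξ * bs am bm ((k:ℤ) + 1) η) := by
    rw [kernelSum, Fin.sum_univ_succ, Fin.sum_univ_castSucc, ← add_assoc, Finset.sum_range]
    have h : ∀ i : Fin k, (i:ℕ) ≠ k := fun i => i.2.ne
    simp [Δw, h]
  have hcd := christoffel_darboux am bm ξ η k
  rw [hS]
  have hr := bs_add_two am bm k ξ
  have hr' := bs_add_two am bm k η
  simp only [nodePoly]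
  push_cast
  rw [show (k:ℤ) + 1 + 1 = k + 2 by ring, show (k:ℤ) + 1 - 1 = k by ring, hr, hr']
  have hi : (1 - ap) * (1 - ap)⁻¹ = 1 := mul_inv_cancel₀ ha'
  linear_combination (1 - ap) * hcd + 2 * (Real.cos ξ - Real.cos η) *
    (bs am bm ((k:ℤ) + 1) ξ * bs am bm ((k:ℤ) + 1) η) * hi

/-! ### Amplitude-phase form and the diagonal values of the kernel -/

section Values

variable {m : ℕ} {pm qm pp qp : ℝ}

lemma bs_mul_sin_eq (hpm : -1 < pm) (hpm' : pm < 1) (hqm : -1 < qm) (hqm' : qm < 1)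
    (l : ℤ) (ξ : ℝ) :
    bs (pm * qm) (pm + qm) l ξ * Real.sin ξ
      = modulus pm ξ * modulus qm ξ * Real.sin ((l + 1) * ξ + phase pm ξ + phase qm ξ) := by
  rw [bs_mul_sin, modulus_mul_sin_add_phase₂ hpm hpm' hqm hqm']
  ring_nf

lemma nodePoly_mul_sin (hpm : -1 < pm) (hpm' : pm < 1) (hqm : -1 < qm) (hqm' : qm < 1)
    (hpp : -1 < pp) (hpp' : pp < 1) (hqp : -1 < qp) (hqp' : qp < 1) (ξ : ℝ) :
    nodePoly m (pm * qm) (pm + qm) (pp * qp) (pp + qp) ξ * Real.sin ξ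
      = modulus pm ξ * modulus qm ξ * modulus pp ξ * modulus qp ξ
        * Real.sin (totalPhase m pm qm pp qp ξ) := by
  have e := modulus_mul_sin_add_phase₂ hpp hpp' hqp hqp' ξ
    (((m:ℝ) + 2) * ξ + phase pm ξ + phase qm ξ)
  have h0 := bs_mul_sin_eq hpm hpm' hqm hqm' ((m:ℤ) + 1) ξ
  have h1 := bs_mul_sin_eq hpm hpm' hqm hqm' (m:ℤ) ξ
  have h2 := bs_mul_sin_eq hpm hpm' hqm hqm' ((m:ℤ) - 1) ξ
  push_cast at h0 h1 h2
  rw [show ((m:ℝ) + 1 + 1) * ξ + phase pm ξ + phase qm ξ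
    = ((m:ℝ) + 2) * ξ + phase pm ξ + phase qm ξ by ring] at h0
  rw [show ((m:ℝ) + 1) * ξ + phase pm ξ + phase qm ξ
    = ((m:ℝ) + 2) * ξ + phase pm ξ + phase qm ξ - ξ by ring] at h1
  rw [show ((m:ℝ) - 1 + 1) * ξ + phase pm ξ + phase qm ξ
    = ((m:ℝ) + 2) * ξ + phase pm ξ + phase qm ξ - 2 * ξ by ring] at h2
  unfold nodePoly totalPhase
  linear_combination h0 - (pp + qp) * h1 + (pp * qp) * h2 - modulus pm ξ * modulus qm ξ * e

/-- At a zero of `sin ∘ totalPhase`, the value of `p_m` is explicit: the phase of `p_m` differs from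
the total phase by `η + θ_{p₊} + θ_{q₊}`, whose sine is a multiple of `sin η`. -/
lemma bs_at_node (hpm : -1 < pm) (hpm' : pm < 1) (hqm : -1 < qm) (hqm' : qm < 1)
    (hpp : -1 < pp) (hpp' : pp < 1) (hqp : -1 < qp) (hqp' : qp < 1) {η : ℝ}
    (hη : Real.sin η ≠ 0) (hG : Real.sin (totalPhase m pm qm pp qp η) = 0) :
    modulus pp η * modulus qp η * bs (pm * qm) (pm + qm) m η
      = -(modulus pm η * modulus qm η * Real.cos (totalPhase m pm qm pp qp η)
          * (1 - pp * qp)) := by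
  have h1 := bs_mul_sin_eq hpm hpm' hqm hqm' (m:ℤ) η
  have e := modulus_mul_sin_add_phase₂ hpp hpp' hqp hqp' η η
  rw [show η - 2 * η = -η by ring, Real.sin_neg, sub_self, Real.sin_zero] at e
  push_cast at h1
  rw [show ((m:ℝ) + 1) * η + phase pm η + phase qm η
    = totalPhase m pm qm pp qp η - (η + phase pp η + phase qp η) by unfold totalPhase; ring,
    Real.sin_sub, hG] at h1
  apply mul_right_cancel₀ hη
  linear_combination modulus pp η * modulus qp η * h1 -
    modulus pm η * modulus qm η * Real.cos (totalPhase m pm qm pp qp η) * e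

lemma differentiableAt_modulus {q : ℝ} (hl : -1 < q) (hr : q < 1) (ξ : ℝ) :
    DifferentiableAt ℝ (modulus q) ξ := by
  unfold modulus
  exact DifferentiableAt.sqrt (by fun_prop) (modulus_radicand_pos hl hr ξ).ne'

/-- The confluent Christoffel–Darboux formula at a node, obtained by differentiating
`kernelSum_mul`, multiplied by `sin ξ`, at `ξ = η`. -/
lemma kernelSum_diag (hm : 1 ≤ m) (hpm : -1 < pm) (hpm' : pm < 1) (hqm : -1 < qm) (hqm' : qm < 1)
    (hpp : -1 < pp) (hpp' : pp < 1) (hqp : -1 < qp) (hqp' : qp < 1) {η : ℝ}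
    (hη : Real.sin η ≠ 0) (hG : Real.sin (totalPhase m pm qm pp qp η) = 0) :
    4 * Real.sin η ^ 2 * kernelSum m (pm * qm) (pm + qm) (pp * qp) η η
      = modulus pm η ^ 2 * modulus qm η ^ 2 * Hw m pm qm pp qp η := by
  have ha' : 1 - pp * qp ≠ 0 := by nlinarith
  have hF : nodePoly m (pm * qm) (pm + qm) (pp * qp) (pp + qp) η = 0 := by
    have h := nodePoly_mul_sin (m := m) hpm hpm' hqm hqm' hpp hpp' hqp hqp' η
    rw [hG, mul_zero] at h
    exact (mul_eq_zero.1 h).resolve_right hη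
  set P := bs (pm * qm) (pm + qm) m η with hP
  set R : ℝ → ℝ := fun ξ => modulus pm ξ * modulus qm ξ * modulus pp ξ * modulus qp ξ with hR
  -- Both sides vanish at `ξ = η`, so only one factor of each product is differentiated there.
  have hfun : (fun ξ => (Real.cos ξ - Real.cos η) *
      (2 * (1 - pp * qp) * (kernelSum m (pm * qm) (pm + qm) (pp * qp) ξ η * Real.sin ξ)))
      = fun ξ => R ξ * Real.sin (totalPhase m pm qm pp qp ξ) * P := by
    funext ξ
    have h1 := kernelSum_mul m hm (pm * qm) (pm + qm) (pp * qp) (pp + qp) ξ η ha'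
    have h2 := nodePoly_mul_sin (m := m) hpm hpm' hqm hqm' hpp hpp' hqp hqp' ξ
    rw [hF] at h1
    simp only [hR]
    linear_combination Real.sin ξ * h1 + P * h2
  have hK : Differentiable ℝ fun ξ =>
      2 * (1 - pp * qp) * (kernelSum m (pm * qm) (pm + qm) (pp * qp) ξ η * Real.sin ξ) := by
    have : Differentiable ℝ fun ξ => kernelSum m (pm * qm) (pm + qm) (pp * qp) ξ η := by
      unfold kernelSum
      exact Differentiable.fun_sum fun l _ => ((differentiable_bs _ _ _).mul_const _).const_mul _
    exact (this.mul Real.differentiable_sin).const_mul _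
  have hRd : DifferentiableAt ℝ R η :=
    (((differentiableAt_modulus hpm hpm' η).mul (differentiableAt_modulus hqm hqm' η)).mul
      (differentiableAt_modulus hpp hpp' η)).mul (differentiableAt_modulus hqp hqp' η)
  have hd1 := ((Real.hasDerivAt_cos η).sub_const (Real.cos η)).fun_mul (hK η).hasDerivAt
  have hd2 := (hRd.hasDerivAt.fun_mul
    (hasDerivAt_totalPhase (m := m) hpm hpm' hqm hqm' hpp hpp' hqp hqp' η).sin).mul_const P
  rw [hfun] at hd1
  have h := hd1.unique hd2
  rw [hG] at h
  have hb := bs_at_node (m := m) hpm hpm' hqm hqm' hpp hpp' hqp hqp' hη hG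
  have hc : Real.cos (totalPhase m pm qm pp qp η) ^ 2 = 1 := by
    have := Real.sin_sq_add_cos_sq (totalPhase m pm qm pp qp η)
    rw [hG] at this; linarith
  rw [← hP] at hb
  simp only [hR] at h
  apply mul_right_cancel₀ ha'
  linear_combination (-2) * h
    - modulus pm η * modulus qm η * Real.cos (totalPhase m pm qm pp qp η) * Hw m pm qm pp qp η * hb
    + (modulus pm η * modulus qm η) ^ 2 * (1 - pp * qp) * Hw m pm qm pp qp η * hc

end Values

/-! ### The amplitude and orthogonality -/

/-- As `c(-ξ)` is the conjugate of `c(ξ)`, the product is `|c(ξ)|²`. -/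
lemma cAmp_mul_cAmp_neg_re {p q : ℝ} (hpl : -1 < p) (hpr : p < 1) (hql : -1 < q) (hqr : q < 1)
    (ξ : ℝ) :
    (cAmp p q ξ * cAmp p q (-ξ)).re
      = modulus p ξ ^ 2 * modulus q ξ ^ 2 / (4 * Real.sin ξ ^ 2) := by
  have he : ∀ t : ℝ, (starRingEnd ℂ) (Complex.exp (-Complex.I * t))
      = Complex.exp (-Complex.I * (-t : ℝ)) := fun t => by
    rw [← Complex.exp_conj]; simp
  have he2 : (starRingEnd ℂ) (Complex.exp (-2 * Complex.I * ξ))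
      = Complex.exp (-2 * Complex.I * (-ξ : ℝ)) := by
    rw [← Complex.exp_conj]; simp [Complex.conj_ofNat]
  have hconj : cAmp p q (-ξ) = (starRingEnd ℂ) (cAmp p q ξ) := by
    simp only [cAmp, map_div₀, map_mul, map_sub, map_one, he, he2, Complex.conj_ofReal]
  have hexp : ∀ t : ℝ, Complex.exp (-Complex.I * t)
      = (Real.cos t : ℂ) - (Real.sin t : ℂ) * Complex.I := fun t => by
    rw [show -Complex.I * (t:ℂ) = ((-t : ℝ) : ℂ) * Complex.I by push_cast; ring,
      Complex.exp_mul_I, ← Complex.ofReal_cos, ← Complex.ofReal_sin]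
    simp [sub_eq_add_neg]
  have hexp2 : Complex.exp (-2 * Complex.I * ξ)
      = (Real.cos (2 * ξ) : ℂ) - (Real.sin (2 * ξ) : ℂ) * Complex.I := by
    rw [← hexp]; congr 1; push_cast; ring
  have hn : ∀ (r t : ℝ), Complex.normSq (1 - (r:ℂ) * ((Real.cos t : ℂ)
      - (Real.sin t : ℂ) * Complex.I)) = 1 - 2 * r * Real.cos t + r ^ 2 := fun r t => by
    rw [Complex.normSq_apply]
    simp [-Complex.ofReal_cos, -Complex.ofReal_sin]
    linear_combination r ^ 2 * Real.sin_sq_add_cos_sq t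
  have hn2 := hn 1 (2 * ξ)
  rw [Complex.ofReal_one, one_mul] at hn2
  rw [hconj, Complex.mul_conj, Complex.ofReal_re, cAmp, Complex.normSq_div, Complex.normSq_mul,
    hexp, hexp2, hn, hn, hn2, modulus_sq hpl hpr, modulus_sq hql hqr]
  congr 1
  rw [Real.cos_two_mul]
  linear_combination (-4) * Real.sin_sq_add_cos_sq ξ

theorem stmt14 (m : ℕ) (hm : 1 ≤ m) (pm qm pp qp : ℝ)
    (h1 : -1 < pm) (h2 : pm ≤ qm) (h3 : qm < 1)
    (h4 : -1 < pp) (h5 : pp ≤ qp) (h6 : qp < 1)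
    (am bm ap bp : ℝ) (ham : am = pm * qm) (hbm : bm = pm + qm)
    (hap : ap = pp * qp) (hbp : bp = pp + qp)
    (ξhat : Fin (m+1) → ℝ)
    (hξ : ∀ lh : Fin (m+1),
      2*(m:ℝ)*(ξhat lh) + v pm (ξhat lh) + v qm (ξhat lh) + v pp (ξhat lh) + v qp (ξhat lh)
        = 2*Real.pi*(((lh : ℕ) : ℝ) + 1)) :
    (∀ lh : Fin (m+1), 0 < Δhat m pm qm pp qp ξhat lh) ∧
    Psi m pm qm pp qp am bm ap ξhat * (Psi m pm qm pp qp am bm ap ξhat).transpose = 1 ∧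
    (Psi m pm qm pp qp am bm ap ξhat).transpose * Psi m pm qm pp qp am bm ap ξhat = 1 := by
  have hpm' : pm < 1 := h2.trans_lt h3
  have hqm : -1 < qm := h1.trans_le h2
  have hpp' : pp < 1 := h5.trans_lt h6
  have hqp : -1 < qp := h4.trans_le h5
  subst ham hbm hap hbp
  set G := totalPhase m pm qm pp qp with hGdef
  have hGmono : StrictMono G := strictMono_totalPhase hm h1 hpm' hqm h3 h4 hpp' hqp h6
  have hGξ : ∀ j, G (ξhat j) = (((j:ℕ):ℝ) + 1) * Real.pi := fun j => by
    have h := hξ j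
    rw [v_eq_s14 h1 hpm', v_eq_s14 hqm h3, v_eq_s14 h4 hpp', v_eq_s14 hqp h6] at h
    rw [hGdef, totalPhase]
    linear_combination h / 2
  have hG0 : G 0 = 0 := by simp [hGdef, totalPhase, phase]
  have hGπ : G Real.pi = ((m:ℝ) + 2) * Real.pi := by simp [hGdef, totalPhase, phase]
  have hpos : ∀ j, 0 < ξhat j := fun j => hGmono.lt_iff_lt.1 (by
    rw [hG0, hGξ]; positivity)
  have hlt : ∀ j, ξhat j < Real.pi := fun j => hGmono.lt_iff_lt.1 (by
    rw [hGπ, hGξ]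
    have : ((j:ℕ):ℝ) < (m:ℝ) + 1 := by exact_mod_cast j.2
    exact mul_lt_mul_of_pos_right (by linarith) Real.pi_pos)
  have hsin : ∀ j, 0 < Real.sin (ξhat j) := fun j =>
    Real.sin_pos_of_pos_of_lt_pi (hpos j) (hlt j)
  have hsinG : ∀ j, Real.sin (totalPhase m pm qm pp qp (ξhat j)) = 0 := fun j => by
    have := Real.sin_nat_mul_pi ((j:ℕ) + 1)
    push_cast at this
    rw [← hGdef, hGξ, this]
  have ham : 0 < 1 - pm * qm := by nlinarith
  have hap : 0 < 1 - pp * qp := by nlinarith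
  have hΔeq : ∀ j, Δhat m pm qm pp qp ξhat j = (modulus pm (ξhat j) ^ 2 * modulus qm (ξhat j) ^ 2
      / (4 * Real.sin (ξhat j) ^ 2) * Hw m pm qm pp qp (ξhat j))⁻¹ := fun j => by
    rw [Δhat, cAmp_mul_cAmp_neg_re h1 hpm' hqm h3]
  have hΔpos : ∀ j, 0 < Δhat m pm qm pp qp ξhat j := fun j => by
    have := Hw_pos hm h1 hpm' hqm h3 h4 hpp' hqp h6 (ξhat j)
    have := modulus_pos h1 hpm' (ξhat j)
    have := modulus_pos hqm h3 (ξhat j)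
    have := hsin j
    rw [hΔeq]
    positivity
  have hdiag : ∀ j, Δhat m pm qm pp qp ξhat j *
      kernelSum m (pm * qm) (pm + qm) (pp * qp) (ξhat j) (ξhat j) = 1 := fun j => by
    have h := kernelSum_diag hm h1 hpm' hqm h3 h4 hpp' hqp h6 (hsin j).ne' (hsinG j)
    have hH := (Hw_pos hm h1 hpm' hqm h3 h4 hpp' hqp h6 (ξhat j)).ne'
    have hp := (modulus_pos h1 hpm' (ξhat j)).ne'
    have hq := (modulus_pos hqm h3 (ξhat j)).ne'
    have hs := (hsin j).ne'
    rw [hΔeq]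
    field_simp
    linear_combination h
  have hF : ∀ j, nodePoly m (pm * qm) (pm + qm) (pp * qp) (pp + qp) (ξhat j) = 0 := fun j => by
    have h := nodePoly_mul_sin (m := m) h1 hpm' hqm h3 h4 hpp' hqp h6 (ξhat j)
    rw [hsinG, mul_zero] at h
    exact (mul_eq_zero.1 h).resolve_right (hsin j).ne'
  have hoff : ∀ j k, j ≠ k →
      kernelSum m (pm * qm) (pm + qm) (pp * qp) (ξhat j) (ξhat k) = 0 := fun j k hjk => by
    have h := kernelSum_mul m hm (pm * qm) (pm + qm) (pp * qp) (pp + qp) (ξhat j) (ξhat k)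
      hap.ne'
    rw [hF, hF, zero_mul, mul_zero, sub_zero] at h
    refine (mul_eq_zero.1 h).resolve_left (mul_ne_zero (mul_ne_zero two_ne_zero ?_) hap.ne')
    refine sub_ne_zero.2 fun hcos => hjk ?_
    have hx : ξhat j = ξhat k := Real.injOn_cos ⟨(hpos j).le, (hlt j).le⟩
      ⟨(hpos k).le, (hlt k).le⟩ hcos
    have hgg := hGξ j
    rw [hx, hGξ k] at hgg
    have := mul_right_cancel₀ Real.pi_pos.ne' hgg
    have h' : ((k:ℕ):ℝ) = ((j:ℕ):ℝ) := by linarith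
    exact (Fin.ext (by exact_mod_cast h')).symm
  have hΔw : ∀ l, 0 ≤ Δw m (pm * qm) (pp * qp) l := fun l => by
    unfold Δw
    refine mul_nonneg (inv_nonneg.2 ?_) (inv_nonneg.2 ?_) <;> split_ifs <;> linarith
  have hmain : Psi m pm qm pp qp (pm * qm) (pm + qm) (pp * qp) ξhat *
      (Psi m pm qm pp qp (pm * qm) (pm + qm) (pp * qp) ξhat).transpose = 1 := by
    ext j k
    have hsum : (Psi m pm qm pp qp (pm * qm) (pm + qm) (pp * qp) ξhat *
        (Psi m pm qm pp qp (pm * qm) (pm + qm) (pp * qp) ξhat).transpose) j k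
        = Real.sqrt (Δhat m pm qm pp qp ξhat j) * Real.sqrt (Δhat m pm qm pp qp ξhat k)
          * kernelSum m (pm * qm) (pm + qm) (pp * qp) (ξhat j) (ξhat k) := by
      rw [Matrix.mul_apply, kernelSum, Finset.mul_sum]
      refine Finset.sum_congr rfl fun l _ => ?_
      simp only [Psi, Matrix.transpose_apply, Matrix.of_apply]
      rw [Real.sqrt_mul (hΔpos j).le, Real.sqrt_mul (hΔpos k).le]
      linear_combination Real.sqrt (Δhat m pm qm pp qp ξhat j) *
        Real.sqrt (Δhat m pm qm pp qp ξhat k) * bs (pm * qm) (pm + qm) ((l:ℕ):ℤ) (ξhat j) *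
        bs (pm * qm) (pm + qm) ((l:ℕ):ℤ) (ξhat k) * Real.mul_self_sqrt (hΔw l)
    rw [hsum]
    rcases eq_or_ne j k with rfl | hjk
    · rw [Real.mul_self_sqrt (hΔpos j).le, hdiag, Matrix.one_apply_eq]
    · rw [hoff j k hjk, mul_zero, Matrix.one_apply_ne hjk]
  exact ⟨hΔpos, hmain, mul_eq_one_comm.1 hmain⟩
end

section
/- Let n ≥ 1, let p_-, q_- ∈ ℝ with -1 < p_- ≤ q_- < 1, set a_- = p_- q_-, b_- = p_- + q_-, and let p_l(ξ) := c(ξ)e^{ilξ} + c(-ξ)e^{-ilξ} with c(ξ) := (1-p_- e^{-iξ})(1-q_- e^{-iξ})/(1-e^{-2iξ}). Let ξ = (ξ_1,…,ξ_n) ∈ ℝⁿ be such that e^{2iξ_j} ≠ 1 for all j and e^{i(ξ_j ± ξ_k)} ≠ 1 for all j ≠ k, and define C(ξ) := ∏_{1≤j≤n} (1-p_- e^{-iξ_j})(1-q_- e^{-iξ_j})/(1-e^{-2iξ_j}) · ∏_{1≤j<k≤n} (1-e^{-i(ξ_j+ξ_k)})^{-1}(1-e^{-i(ξ_j-ξ_k)})^{-1},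 and V(ξ) := ∏_{1≤j<k≤n} 2(cos ξ_j - cos ξ_k). Then for every weakly decreasing λ = (λ_1 ≥ … ≥ λ_n ≥ 0) ∈ ℤⁿ: det[ p_{n-j+λ_j}(ξ_k) ]_{1≤j,k≤n} = V(ξ) · ∑_{(σ,ε) ∈ S_n × {1,-1}ⁿ} C(ε_1 ξ_{σ(1)},…,ε_n ξ_{σ(n)}) · exp( i(ε_1 ξ_{σ(1)} λ_1 + ⋯ + ε_n ξ_{σ(n)} λ_n) ). -/
/-- `p_l(ξ) = c(ξ)e^{ilξ} + c(-ξ)e^{-ilξ}`. -/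
noncomputable def pW (pm qm : ℝ) (l : ℤ) (ξ : ℝ) : ℂ :=
  cAmp pm qm ξ * Complex.exp (Complex.I * l * ξ) +
    cAmp pm qm (-ξ) * Complex.exp (-Complex.I * l * ξ)

/-- The multivariate amplitude `C(ξ)`. -/
noncomputable def CC (pm qm : ℝ) {n : ℕ} (ξ : Fin n → ℝ) : ℂ :=
  (∏ j, cAmp pm qm (ξ j)) *
    ∏ j, ∏ k ∈ Finset.Ioi j,
      ((1 - Complex.exp (-Complex.I * ((ξ j + ξ k : ℝ) : ℂ)))⁻¹ *
        (1 - Complex.exp (-Complex.I * ((ξ j - ξ k : ℝ) : ℂ)))⁻¹)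

/-- The Vandermonde-type determinant `V(ξ) = ∏_{j<k} 2(cos ξ_j - cos ξ_k)`. -/
noncomputable def VV {n : ℕ} (ξ : Fin n → ℝ) : ℝ :=
  ∏ j, ∏ k ∈ Finset.Ioi j, 2 * (Real.cos (ξ j) - Real.cos (ξ k))

/-- The sign `±1` encoded by a Boolean. -/
noncomputable def sgnB (b : Bool) : ℝ := if b then (1 : ℝ) else -1

lemma pW_eq_sum (pm qm : ℝ) (l : ℤ) (x : ℝ) :
    pW pm qm l x = ∑ b : Bool, cAmp pm qm (sgnB b * x) *
      Complex.exp (Complex.I * l * ((sgnB b * x : ℝ) : ℂ)) := by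
  simp [pW, sgnB]

lemma two_cos_sub (x y : ℝ) :
    ((2 * (Real.cos x - Real.cos y) : ℝ) : ℂ) = Complex.exp (Complex.I * x) *
      ((1 - Complex.exp (-Complex.I * ((x + y : ℝ) : ℂ))) *
        (1 - Complex.exp (-Complex.I * ((x - y : ℝ) : ℂ)))) := by
  have e1 : Complex.exp (-Complex.I * ((x + y : ℝ) : ℂ)) =
      (Complex.exp (Complex.I * x))⁻¹ * (Complex.exp (Complex.I * y))⁻¹ := by
    rw [← Complex.exp_neg, ← Complex.exp_neg, ← Complex.exp_add]
    congr 1; push_cast; ring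
  have e2 : Complex.exp (-Complex.I * ((x - y : ℝ) : ℂ)) =
      (Complex.exp (Complex.I * x))⁻¹ * Complex.exp (Complex.I * y) := by
    rw [← Complex.exp_neg, ← Complex.exp_add]
    congr 1; push_cast; ring
  have c (z : ℝ) : ((Real.cos z : ℝ) : ℂ) =
      (Complex.exp (Complex.I * z) + (Complex.exp (Complex.I * z))⁻¹) / 2 := by
    rw [Complex.ofReal_cos, Complex.cos, ← Complex.exp_neg]
    congr 3 <;> ring_nf
  rw [e1, e2]
  push_cast [c]
  have hx := Complex.exp_ne_zero (Complex.I * x)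
  have hy := Complex.exp_ne_zero (Complex.I * y)
  field_simp
  ring

lemma VV_eq_det {n : ℕ} (ξ : Fin n → ℝ) :
    VV ξ = (Matrix.vandermonde fun j => -2 * Real.cos (ξ j)).det := by
  rw [Matrix.det_vandermonde, VV]
  refine Finset.prod_congr rfl fun j _ => Finset.prod_congr rfl fun k _ => ?_
  ring

lemma VV_perm {n : ℕ} (ξ : Fin n → ℝ) (σ : Equiv.Perm (Fin n)) (ε : Fin n → Bool) :
    VV (fun j => sgnB (ε j) * ξ (σ j)) = ((Equiv.Perm.sign σ : ℤ) : ℝ) * VV ξ := by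
  rw [VV_eq_det, VV_eq_det, ← Matrix.det_permute]
  congr 1
  ext j k
  have : Real.cos (sgnB (ε j) * ξ (σ j)) = Real.cos (ξ (σ j)) := by
    cases ε j <;> simp [sgnB]
  simp [Matrix.vandermonde, this]

lemma VV_mul_pairs {n : ℕ} (θ : Fin n → ℝ)
    (h : ∀ j k, j ≠ k → Complex.exp (-Complex.I * ((θ j + θ k : ℝ) : ℂ)) ≠ 1 ∧
      Complex.exp (-Complex.I * ((θ j - θ k : ℝ) : ℂ)) ≠ 1) :
    ((VV θ : ℝ) : ℂ) * ∏ j, ∏ k ∈ Finset.Ioi j,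
      ((1 - Complex.exp (-Complex.I * ((θ j + θ k : ℝ) : ℂ)))⁻¹ *
        (1 - Complex.exp (-Complex.I * ((θ j - θ k : ℝ) : ℂ)))⁻¹) =
      ∏ j : Fin n, Complex.exp (Complex.I * (((n : ℤ) - 1 - (j : ℕ) : ℤ) : ℂ) * θ j) := by
  rw [VV, Complex.ofReal_prod, ← Finset.prod_mul_distrib]
  refine Finset.prod_congr rfl fun j _ => ?_
  rw [Complex.ofReal_prod, ← Finset.prod_mul_distrib]
  trans ∏ _k ∈ Finset.Ioi j, Complex.exp (Complex.I * θ j)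
  · refine Finset.prod_congr rfl fun k hk => ?_
    obtain ⟨ha, hb⟩ := h j k (Finset.mem_Ioi.1 hk).ne
    have ha' := sub_ne_zero.2 ha.symm
    have hb' := sub_ne_zero.2 hb.symm
    rw [two_cos_sub, ← mul_inv, mul_assoc, mul_inv_cancel₀ (mul_ne_zero ha' hb'), mul_one]
  · rw [Finset.prod_const, Fin.card_Ioi, ← Complex.exp_nat_mul]
    have hj : ((n - 1 - (j : ℕ) : ℕ) : ℤ) = (n : ℤ) - 1 - (j : ℕ) := by omega
    rw [← hj, Int.cast_natCast]
    congr 1; ring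

lemma exp_neg_I_ne_one {x : ℝ} (h : Complex.exp (Complex.I * (x : ℂ)) ≠ 1) :
    Complex.exp (-Complex.I * (x : ℂ)) ≠ 1 := by
  rwa [neg_mul, Complex.exp_neg, ne_eq, inv_eq_one]

/-- The regularity conditions on pairs are invariant under signed permutations of `ξ`. -/
lemma regular_signed {n : ℕ} (ξ : Fin n → ℝ)
    (h : ∀ j k, j ≠ k →
      Complex.exp (Complex.I * ((ξ j + ξ k : ℝ) : ℂ)) ≠ 1 ∧
      Complex.exp (Complex.I * ((ξ j - ξ k : ℝ) : ℂ)) ≠ 1)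
    (σ : Equiv.Perm (Fin n)) (ε : Fin n → Bool) (j k : Fin n) (hjk : j ≠ k) :
    Complex.exp (-Complex.I *
        ((sgnB (ε j) * ξ (σ j) + sgnB (ε k) * ξ (σ k) : ℝ) : ℂ)) ≠ 1 ∧
      Complex.exp (-Complex.I *
        ((sgnB (ε j) * ξ (σ j) - sgnB (ε k) * ξ (σ k) : ℝ) : ℂ)) ≠ 1 := by
  obtain ⟨ha, hb⟩ := h (σ j) (σ k) (σ.injective.ne hjk)
  have ha' := exp_neg_I_ne_one ha
  have hb' := exp_neg_I_ne_one hb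
  generalize ξ (σ j) = x at *
  generalize ξ (σ k) = y at *
  have r1 : Complex.I * ((x + y : ℝ) : ℂ) = -Complex.I * ((-x - y : ℝ) : ℂ) := by
    push_cast; ring
  have r2 : Complex.I * ((x - y : ℝ) : ℂ) = -Complex.I * ((-x + y : ℝ) : ℂ) := by
    push_cast; ring
  rw [r1] at ha
  rw [r2] at hb
  cases ε j <;> cases ε k <;>
    simp only [sgnB, if_true, if_false, one_mul, neg_mul, sub_neg_eq_add, ← sub_eq_add_neg,
      Bool.false_eq_true] at * <;> constructor <;> assumption

theorem stmt16 (n : ℕ) (hn : 1 ≤ n) (pm qm : ℝ)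
    (h1 : -1 < pm) (h2 : pm ≤ qm) (h3 : qm < 1)
    (ξ : Fin n → ℝ)
    (hreg1 : ∀ j, Complex.exp (2 * Complex.I * (ξ j : ℂ)) ≠ 1)
    (hreg2 : ∀ j k, j ≠ k →
      Complex.exp (Complex.I * ((ξ j + ξ k : ℝ) : ℂ)) ≠ 1 ∧
      Complex.exp (Complex.I * ((ξ j - ξ k : ℝ) : ℂ)) ≠ 1)
    (lam : Fin n → ℤ) (hlam : ∀ j k : Fin n, j ≤ k → lam k ≤ lam j) (hpos : ∀ j, 0 ≤ lam j) :
    Matrix.det (Matrix.of fun j k : Fin n => pW pm qm ((n : ℤ) - 1 - (j : ℕ) + lam j) (ξ k))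
      = ((VV ξ : ℝ) : ℂ) *
        ∑ σ : Equiv.Perm (Fin n), ∑ ε : Fin n → Bool,
          CC pm qm (fun j => (if ε j then (1:ℝ) else -1) * ξ (σ j)) *
            Complex.exp (Complex.I *
              ((∑ j, (if ε j then (1:ℝ) else -1) * ξ (σ j) * (lam j : ℝ) : ℝ) : ℂ)) := by
  rw [← Matrix.det_transpose, Matrix.det_apply', Finset.mul_sum]
  refine Finset.sum_congr rfl fun σ _ => ?_
  simp only [Matrix.transpose_apply, Matrix.of_apply, pW_eq_sum]
  rw [Finset.prod_univ_sum, Fintype.piFinset_univ, Finset.mul_sum, Finset.mul_sum]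
  refine Finset.sum_congr rfl fun ε _ => ?_
  change _ = _ * (CC pm qm (fun j => sgnB (ε j) * ξ (σ j)) *
    Complex.exp (Complex.I * ((∑ j, sgnB (ε j) * ξ (σ j) * (lam j : ℝ) : ℝ) : ℂ)))
  have hp := VV_mul_pairs _ (regular_signed ξ hreg2 σ ε)
  have hV := VV_perm ξ σ ε
  set θ : Fin n → ℝ := fun j => sgnB (ε j) * ξ (σ j) with hθ
  have hs : ((Equiv.Perm.sign σ : ℤ) : ℂ) * ((Equiv.Perm.sign σ : ℤ) : ℂ) = 1 := by
    rw [← Int.cast_mul, ← Units.val_mul, Int.units_mul_self]; simp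
  have hV' : ((VV ξ : ℝ) : ℂ) = ((Equiv.Perm.sign σ : ℤ) : ℂ) * ((VV θ : ℝ) : ℂ) := by
    rw [hV, Complex.ofReal_mul, Complex.ofReal_intCast, ← mul_assoc, hs, one_mul]
  have hexp : Complex.exp (Complex.I * ((∑ j, θ j * (lam j : ℝ) : ℝ) : ℂ)) =
      ∏ j, Complex.exp (Complex.I * (lam j : ℂ) * θ j) := by
    rw [← Complex.exp_sum, Complex.ofReal_sum, Finset.mul_sum]
    congr 1
    refine Finset.sum_congr rfl fun j _ => ?_
    push_cast; ring
  have hsplit : ∏ j : Fin n, cAmp pm qm (θ j) *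
        Complex.exp (Complex.I * (((n : ℤ) - 1 - (j : ℕ) + lam j : ℤ) : ℂ) * θ j) =
      (∏ j : Fin n, cAmp pm qm (θ j)) *
        ((∏ j : Fin n, Complex.exp (Complex.I * (((n : ℤ) - 1 - (j : ℕ) : ℤ) : ℂ) * θ j)) *
          ∏ j, Complex.exp (Complex.I * (lam j : ℂ) * θ j)) := by
    rw [← Finset.prod_mul_distrib, ← Finset.prod_mul_distrib]
    refine Finset.prod_congr rfl fun j _ => ?_
    rw [← Complex.exp_add]
    congr 2; push_cast; ring
  change _ * ∏ j : Fin n, cAmp pm qm (θ j) *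
    Complex.exp (Complex.I * (((n : ℤ) - 1 - (j : ℕ) + lam j : ℤ) : ℂ) * θ j) =
    _ * (_ * Complex.exp (Complex.I * ((∑ j, θ j * (lam j : ℝ) : ℝ) : ℂ)))
  rw [hsplit, ← hp, hexp, hV', CC]
  ring
end
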